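/- arXiv:math/0612664 — 3 statements merged into one kernel-verified Lean document; each statement's English description precedes it below -/
import Mathlib

section
/- Let F_q be a finite field with q elements and n ≥ 1. The number of unipotent matrices in GL_n(F_q), i.e. matrices g ∈ GL_n(F_q) with (g − 1)^n = 0, equals q^{n² − n}. -/
/-!
Subtracting `1` identifies the unipotent matrices with the nilpotent endomorphisms of `Fⁿ`, so the
claim is that an `n`-dimensional space `V` has `q ^ (n * (n - 1))` nilpotent endomorphisms
(Fine–Herstein).

The proof counts something finer. If `v₀, …, v_m` are linearly independent in `V`, there are exactly
`q ^ (n * (n - m - 1))` nilpotent `N` with `N vᵢ = vᵢ₊₁` for all `i < m`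
(`card_nilpotent_chain`). The case `m = 0` is the claim. Let `j = m + 1`, let `W` be the span of
the `vᵢ`, and sort such `N` by the value `w = N v_m`:

* if `w = 0`, then `N` preserves `W` and acts on it as a fixed nilpotent shift; relative to a
  complement `C` of `W` it is block triangular, with an arbitrary block `C → W` and a nilpotent
  block `C → C`, so induction on the dimension gives `q ^ (j * (n - j)) * q ^ ((n - j) * (n - j - 1))`
  possibilities (`card_nilpotent_extend`);
* if `w ∈ W` is nonzero there are none, because a nilpotent endomorphism of the `j`-dimensional
  space `W` has `j`-th power zero, and that power sends `v₀` to `w`;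
* each of the `q ^ n - q ^ j` vectors `w ∉ W` extends the chain to length `j + 1`, and downward
  induction on the length gives `q ^ (n * (n - j - 1))` possibilities.

The total is `q ^ ((n - j) * (n - 1)) + (q ^ n - q ^ j) * q ^ (n * (n - j - 1)) = q ^ (n * (n - j))`.
-/

open Module

/-! ### Nilpotent endomorphisms extending a given one -/

lemma pow_finrank_eq_zero_of_isNilpotent {F V : Type*} [Field F] [AddCommGroup V] [Module F V]
    [FiniteDimensional F V] {N : End F V} (hN : IsNilpotent N) : N ^ finrank F V = 0 := by
  have h1 : N.charpoly = Polynomial.X ^ finrank F V :=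
    (LinearMap.charpoly_eq_X_pow_iff N).2 fun x => by
      obtain ⟨k, hk⟩ := hN
      exact ⟨k, by simp [hk]⟩
  have h2 := LinearMap.aeval_self_charpoly N
  rwa [h1, map_pow, Polynomial.aeval_X] at h2

/-- A block triangular endomorphism, with `N₀` the block on `W`, is nilpotent iff its other diagonal
block `D` is. -/
lemma isNilpotent_triangular_iff {F W C : Type*} [Field F] [AddCommGroup W] [Module F W]
    [AddCommGroup C] [Module F C] {N₀ : End F W} (h₀ : IsNilpotent N₀) (B : C →ₗ[F] W)
    (D : End F C) :
    IsNilpotent (((N₀.coprod B).prod (D ∘ₗ LinearMap.snd F W C) : End F (W × C))) ↔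
      IsNilpotent D := by
  set N : End F (W × C) := (N₀.coprod B).prod (D ∘ₗ LinearMap.snd F W C) with hN
  have hsnd : ∀ (k : ℕ) (x : W × C), ((N ^ k) x).2 = (D ^ k) x.2 := by
    intro k
    induction k with
    | zero => intro x; simp
    | succ k ih => intro x; rw [pow_succ, pow_succ, Module.End.mul_apply, ih]; simp [hN]
  have hinl : ∀ (k : ℕ) (w : W), (N ^ k) (w, 0) = ((N₀ ^ k) w, 0) := by
    intro k
    induction k with
    | zero => intro w; simp
    | succ k ih =>
      intro w
      have : N (w, 0) = (N₀ w, 0) := by simp [hN]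
      rw [pow_succ, pow_succ, Module.End.mul_apply, this, ih]; simp
  constructor
  · rintro ⟨k, hk⟩
    refine ⟨k, LinearMap.ext fun c => ?_⟩
    have := hsnd k (0, c)
    simpa [hk] using this.symm
  · rintro ⟨k, hk⟩
    obtain ⟨l, hl⟩ := h₀
    refine ⟨l + k, LinearMap.ext fun x => ?_⟩
    have h2 : ((N ^ k) x).2 = 0 := by rw [hsnd, hk]; simp
    have h1 : (N ^ k) x = (((N ^ k) x).1, 0) := Prod.ext rfl h2
    rw [pow_add, Module.End.mul_apply, h1, hinl, hl]; simp

/-- The nilpotent endomorphisms of `W × C` restricting to a given nilpotent `N₀` on `W` are block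
triangular; they are parametrized by an arbitrary block `C → W` and a nilpotent block `C → C`. -/
noncomputable def nilpotentTriangularEquiv {F W C : Type*} [Field F] [AddCommGroup W] [Module F W]
    [AddCommGroup C] [Module F C] {N₀ : End F W} (h₀ : IsNilpotent N₀) :
    {N : End F (W × C) // IsNilpotent N ∧ ∀ w : W, N (w, 0) = (N₀ w, 0)} ≃
      (C →ₗ[F] W) × {D : End F C // IsNilpotent D} :=
  have key : ∀ N : End F (W × C), (∀ w : W, N (w, 0) = (N₀ w, 0)) →
      (N₀.coprod (LinearMap.fst F W C ∘ₗ N ∘ₗ LinearMap.inr F W C)).prod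
        ((LinearMap.snd F W C ∘ₗ N ∘ₗ LinearMap.inr F W C) ∘ₗ LinearMap.snd F W C) = N := by
    intro N hN
    ext x
    · simp [hN]
    · simp [hN]
    · simp
    · simp
  { toFun := fun N => (LinearMap.fst F W C ∘ₗ N.1 ∘ₗ LinearMap.inr F W C,
      ⟨LinearMap.snd F W C ∘ₗ N.1 ∘ₗ LinearMap.inr F W C, by
        rw [← isNilpotent_triangular_iff h₀ (LinearMap.fst F W C ∘ₗ N.1 ∘ₗ LinearMap.inr F W C),
          key N.1 N.2.2]
        exact N.2.1⟩)
    invFun := fun p => ⟨(N₀.coprod p.1).prod (p.2.1 ∘ₗ LinearMap.snd F W C),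
      (isNilpotent_triangular_iff h₀ p.1 p.2.1).2 p.2.2, fun w => by simp⟩
    left_inv := fun N => Subtype.ext (key N.1 N.2.2)
    right_inv := fun p => by
      refine Prod.ext ?_ (Subtype.ext ?_)
      · ext x; simp
      · ext x; simp }

/-- A fixed nilpotent endomorphism of `W` extends to `q ^ (dim W * dim C)` times as many nilpotent
endomorphisms of `V` as there are nilpotent endomorphisms of a complement `C`. -/
lemma card_nilpotent_extend {F V : Type*} [Field F] [Finite F] [AddCommGroup V] [Module F V]
    [FiniteDimensional F V] {W C : Submodule F V} (hWC : IsCompl W C) {N₀ : End F W}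
    (h₀ : IsNilpotent N₀) :
    Nat.card {N : End F V // IsNilpotent N ∧ ∀ w : W, N w = N₀ w} =
      Nat.card F ^ (finrank F C * finrank F W) * Nat.card {D : End F C // IsNilpotent D} := by
  let e : (W × C) ≃ₗ[F] V := W.prodEquivOfIsCompl C hWC
  have he : ∀ w : W, e (w, 0) = w := fun w => by simp [e]
  have hiff : ∀ N : End F (W × C), (IsNilpotent N ∧ ∀ w : W, N (w, 0) = (N₀ w, 0)) ↔
      (IsNilpotent (e.conjAlgEquiv F N) ∧ ∀ w : W, e.conjAlgEquiv F N w = N₀ w) := by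
    intro N
    refine and_congr (IsNilpotent.map_iff (e.conjAlgEquiv F).injective).symm
      (forall_congr' fun w => ?_)
    have h1 : e.symm (w : V) = (w, 0) := by rw [LinearEquiv.symm_apply_eq, he]
    have h2 : e.conjAlgEquiv F N w = e (N (w, 0)) := by
      simp [LinearEquiv.conjAlgEquiv_apply, h1]
    rw [h2, ← he (N₀ w), e.injective.eq_iff]
  rw [← Nat.card_congr ((e.conjAlgEquiv F).toEquiv.subtypeEquiv hiff),
    Nat.card_congr (nilpotentTriangularEquiv h₀), Nat.card_prod,
    Module.natCard_eq_pow_finrank (K := F), Module.finrank_linearMap]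

/-! ### Chains of linearly independent vectors -/

/-- The span of a linearly independent chain is invariant as soon as the image of its last vector
lies in it, and nilpotency then forces that image to vanish. -/
lemma chain_end_eq_zero {F V : Type*} [Field F] [AddCommGroup V] [Module F V]
    [FiniteDimensional F V] {m : ℕ} {v : ℕ → V}
    (hv : LinearIndependent F (fun i : Fin (m + 1) => v i)) {N : End F V} (hN : IsNilpotent N)
    (hc : ∀ i < m, N (v i) = v (i + 1))
    (hw : N (v m) ∈ Submodule.span F (Set.range fun i : Fin (m + 1) => v i)) : N (v m) = 0 := by
  set W := Submodule.span F (Set.range fun i : Fin (m + 1) => v i) with hW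
  have hvW : ∀ i < m + 1, v i ∈ W := fun i hi => Submodule.subset_span ⟨⟨i, hi⟩, rfl⟩
  have hinv : ∀ x ∈ W, N x ∈ W := by
    intro x hx
    have : W ≤ W.comap N := by
      conv_lhs => rw [hW]
      rw [Submodule.span_le]
      rintro _ ⟨i, rfl⟩
      show N (v i) ∈ W
      rcases Nat.lt_succ_iff_lt_or_eq.1 i.2 with h | h
      · rw [hc _ h]; exact hvW _ (by omega)
      · rw [h]; exact hw
    exact this hx
  have hdim : finrank F W = m + 1 := by
    rw [hW, finrank_span_eq_card hv, Fintype.card_fin]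
  have h0 := pow_finrank_eq_zero_of_isNilpotent (Module.End.isNilpotent.restrict hinv hN)
  rw [hdim, Module.End.pow_restrict] at h0
  have h1 : (N ^ (m + 1)) (v 0) = 0 := by
    have := congrArg (fun f : End F W => ((f ⟨v 0, hvW 0 (by omega)⟩ : W) : V)) h0
    simpa using this
  have h2 : ∀ i ≤ m, (N ^ i) (v 0) = v i := by
    intro i
    induction i with
    | zero => simp
    | succ i ih =>
      intro hi
      rw [pow_succ', Module.End.mul_apply, ih (by omega), hc i (by omega)]
  rw [pow_succ', Module.End.mul_apply, h2 m le_rfl] at h1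
  exact h1

/-- The shift along a linearly independent family, killing its last vector, as a nilpotent
endomorphism `N₀` of its span; restricting to `N₀` is the same as following the chain to `0`. -/
lemma exists_nilpotent_shift {F V : Type*} [Field F] [AddCommGroup V] [Module F V]
    {m : ℕ} {v : ℕ → V} (hv : LinearIndependent F (fun i : Fin (m + 1) => v i)) :
    ∃ N₀ : End F (Submodule.span F (Set.range fun i : Fin (m + 1) => v i)), IsNilpotent N₀ ∧
      ∀ N : End F V, (∀ w, N (w : Submodule.span F (Set.range fun i : Fin (m + 1) => v i)) = N₀ w) ↔
        (∀ i < m, N (v i) = v (i + 1)) ∧ N (v m) = 0 := by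
  set b := Basis.span hv with hb
  have hbv : ∀ i, (b i : V) = v i := fun i => by rw [hb, Basis.span_apply]
  let N₀ : End F (Submodule.span F (Set.range fun i : Fin (m + 1) => v i)) :=
    b.constr F fun i => if h : (i : ℕ) + 1 < m + 1 then b ⟨i + 1, h⟩ else 0
  have hN₀ : ∀ i, N₀ (b i) = if h : (i : ℕ) + 1 < m + 1 then b ⟨i + 1, h⟩ else 0 :=
    fun i => b.constr_basis F _ i
  refine ⟨N₀, ⟨m + 1, b.ext fun i => ?_⟩, fun N => ⟨fun h => ⟨fun i hi => ?_, ?_⟩, fun h => ?_⟩⟩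
  · have : ∀ (k : ℕ) (i : Fin (m + 1)), m + 1 ≤ i + k → (N₀ ^ k) (b i) = 0 := by
      intro k
      induction k with
      | zero => intro i hi; omega
      | succ k ih =>
        intro i hi
        rw [pow_succ, Module.End.mul_apply, hN₀]
        split_ifs with h
        · exact ih _ (by simp only; omega)
        · simp
    simpa using this (m + 1) i (by omega)
  · have := h (b ⟨i, by omega⟩)
    rw [hN₀, dif_pos (by simpa using hi), hbv, hbv] at this
    exact this
  · have := h (b ⟨m, by omega⟩)
    rw [hN₀, dif_neg (by simp), hbv] at this
    simpa using this
  · have : N ∘ₗ Submodule.subtype _ = Submodule.subtype _ ∘ₗ N₀ := by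
      refine b.ext fun i => ?_
      simp only [LinearMap.comp_apply, Submodule.subtype_apply, hN₀, hbv]
      split_ifs with hi
      · rw [hbv, h.1 i (by omega)]
      · have : (i : ℕ) = m := by omega
        rw [this, h.2]; rfl
    exact fun w => LinearMap.congr_fun this w

/-! ### Counting -/

/-- One step of the recursion: the nilpotent endomorphisms along a chain spanning `W`, sorted by the
image `w` of its last vector. The first summand comes from `w = 0`, the second from `w ∉ W`. -/
lemma card_nilpotent_chain_step {F V : Type*} [Field F] [Finite F] [AddCommGroup V]
    [Module F V] [FiniteDimensional F V]
    (ih : ∀ C : Submodule F V, finrank F C < finrank F V →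
      Nat.card {D : End F C // IsNilpotent D} =
        Nat.card F ^ (finrank F C * (finrank F C - 1)))
    {d m : ℕ} {v : ℕ → V} (hv : LinearIndependent F (fun i : Fin (m + 1) => v i))
    (hm : m + 1 + d = finrank F V) (X : ℕ)
    (hX : ∀ w ∉ Submodule.span F (Set.range fun i : Fin (m + 1) => v i),
      Nat.card {N : End F V // (IsNilpotent N ∧ ∀ i < m, N (v i) = v (i + 1)) ∧ N (v m) = w} = X) :
    Nat.card {N : End F V // IsNilpotent N ∧ ∀ i < m, N (v i) = v (i + 1)} =
      Nat.card F ^ (d * (m + 1)) * Nat.card F ^ (d * (d - 1)) +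
        (Nat.card F ^ (m + 1 + d) - Nat.card F ^ (m + 1)) * X := by
  classical
  have : Finite V := Module.finite_of_finite F
  have : Finite (End F V) := Module.finite_of_finite F
  have := Fintype.ofFinite V
  set W := Submodule.span F (Set.range fun i : Fin (m + 1) => v i) with hW
  have hdim : finrank F W = m + 1 := by
    rw [hW, finrank_span_eq_card hv, Fintype.card_fin]
  obtain ⟨C, hWC⟩ := Submodule.exists_isCompl W
  have hC := Submodule.finrank_add_eq_of_isCompl hWC
  have hCd : finrank F C = d := by omega
  obtain ⟨N₀, h₀, hN₀⟩ := exists_nilpotent_shift hv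
  have hzero : Nat.card {N : End F V //
      (IsNilpotent N ∧ ∀ i < m, N (v i) = v (i + 1)) ∧ N (v m) = 0} =
      Nat.card F ^ (d * (m + 1)) * Nat.card F ^ (d * (d - 1)) := by
    have h := card_nilpotent_extend hWC h₀
    rw [ih C (by omega), hCd, hdim] at h
    rw [← h]
    refine Nat.card_congr (Equiv.subtypeEquivRight fun N => ?_)
    rw [hN₀, and_assoc]
  have hfib : ∀ w : V, Nat.card {N : End F V //
      (IsNilpotent N ∧ ∀ i < m, N (v i) = v (i + 1)) ∧ N (v m) = w} =
      (if w = 0 then Nat.card F ^ (d * (m + 1)) * Nat.card F ^ (d * (d - 1)) else 0) +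
        (if w ∉ W then X else 0) := by
    intro w
    by_cases h0 : w = 0
    · subst h0
      rw [hzero]; simp
    by_cases hw : w ∈ W
    · rw [if_neg h0, if_neg (not_not.2 hw), Nat.card_eq_zero]
      refine Or.inl ⟨fun N => h0 ?_⟩
      obtain ⟨N, ⟨hN, hc⟩, hNw⟩ := N
      rw [← hNw]
      exact chain_end_eq_zero hv hN hc (by rw [hNw]; exact hw)
    · rw [if_neg h0, if_pos hw, hX w hw, zero_add]
  have hcompl : (Finset.univ.filter fun w : V => w ∉ W).card =
      Nat.card F ^ (m + 1 + d) - Nat.card F ^ (m + 1) := by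
    have h1 : (Finset.univ.filter fun w : V => w ∈ W).card = Nat.card F ^ (m + 1) := by
      rw [← hdim, ← Module.natCard_eq_pow_finrank (K := F) (V := W), Nat.card_eq_fintype_card,
        Fintype.card_subtype]
    have h2 := Finset.card_filter_add_card_filter_not (s := (Finset.univ : Finset V))
      (fun w => w ∈ W)
    rw [Finset.card_univ, ← Nat.card_eq_fintype_card, Module.natCard_eq_pow_finrank (K := F),
      ← hm, h1] at h2
    omega
  let φ : {N : End F V // IsNilpotent N ∧ ∀ i < m, N (v i) = v (i + 1)} → V := fun N => N.1 (v m)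
  rw [← Nat.card_congr (Equiv.sigmaFiberEquiv φ), Nat.card_sigma]
  have hφ : ∀ w, Nat.card {N // φ N = w} = Nat.card {N : End F V //
      (IsNilpotent N ∧ ∀ i < m, N (v i) = v (i + 1)) ∧ N (v m) = w} := fun w =>
    Nat.card_congr (Equiv.subtypeSubtypeEquivSubtypeInter _ fun N : End F V => N (v m) = w)
  simp_rw [hφ, hfib]
  rw [Finset.sum_add_distrib, ← Finset.sum_filter (fun w => w ∉ W), Finset.sum_const, hcompl]
  simp

/-- The number of nilpotent endomorphisms moving a linearly independent family of `m + 1` vectors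
one step along, in a space of dimension `m + 1 + d`, given the count of all nilpotent endomorphisms
in smaller dimensions. -/
lemma card_nilpotent_chain {F V : Type*} [Field F] [Finite F] [AddCommGroup V]
    [Module F V] [FiniteDimensional F V]
    (ih : ∀ C : Submodule F V, finrank F C < finrank F V →
      Nat.card {D : End F C // IsNilpotent D} =
        Nat.card F ^ (finrank F C * (finrank F C - 1))) (d : ℕ) :
    ∀ (m : ℕ) (v : ℕ → V), LinearIndependent F (fun i : Fin (m + 1) => v i) →
      m + 1 + d = finrank F V →
      Nat.card {N : End F V // IsNilpotent N ∧ ∀ i < m, N (v i) = v (i + 1)} =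
        Nat.card F ^ (finrank F V * d) := by
  induction d with
  | zero =>
    intro m v hv hm
    -- The chain spans `V`, so no vector lies outside its span and the value `X = 0` is vacuous.
    rw [card_nilpotent_chain_step ih hv hm 0 fun w hw => absurd ?_ hw]
    · simp
    · have htop : Submodule.span F (Set.range fun i : Fin (m + 1) => v i) = ⊤ :=
        Submodule.eq_top_of_finrank_eq (by rw [finrank_span_eq_card hv, Fintype.card_fin]; omega)
      rw [htop]
      trivial
  | succ d ihd =>
    intro m v hv hm
    rw [card_nilpotent_chain_step ih hv hm (Nat.card F ^ (finrank F V * d)) ?_]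
    · have hle : Nat.card F ^ (m + 1) ≤ Nat.card F ^ (m + 1 + (d + 1)) :=
        Nat.pow_le_pow_right Nat.card_pos (by omega)
      rw [← hm]
      zify [hle]
      simp only [Nat.add_sub_cancel]
      ring
    · intro w hw
      have hupd : ∀ i < m + 1, Function.update v (m + 1) w i = v i := fun i hi =>
        Function.update_of_ne (by omega) _ _
      have hv' : LinearIndependent F (fun i : Fin (m + 1 + 1) => Function.update v (m + 1) w i) := by
        convert linearIndependent_finSnoc.2 ⟨hv, hw⟩ using 1
        funext i
        refine Fin.lastCases ?_ (fun i => ?_) i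
        · simp
        · rw [Fin.snoc_castSucc, Fin.val_castSucc, hupd _ i.2]
      rw [← ihd (m + 1) _ hv' (by omega)]
      refine Nat.card_congr (Equiv.subtypeEquivRight fun N => ?_)
      rw [and_assoc]
      refine and_congr_right fun _ => ⟨fun h i hi => ?_, fun h => ⟨fun i hi => ?_, ?_⟩⟩
      · rw [hupd i hi]
        rcases Nat.lt_succ_iff_lt_or_eq.1 hi with hi' | rfl
        · rw [hupd _ (by omega), h.1 i hi']
        · rw [h.2, Function.update_self]
      · have := h i (by omega)
        rwa [hupd _ (by omega), hupd _ (by omega)] at this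
      · have := h m (by omega)
        rwa [hupd _ (by omega), Function.update_self] at this

/-- Fine–Herstein: an `n`-dimensional space over `F_q` has `q ^ (n * (n - 1))` nilpotent
endomorphisms. -/
lemma card_nilpotent {F : Type*} [Field F] [Finite F] (n : ℕ) :
    ∀ (V : Type*) [AddCommGroup V] [Module F V] [FiniteDimensional F V], finrank F V = n →
      Nat.card {D : End F V // IsNilpotent D} = Nat.card F ^ (n * (n - 1)) := by
  induction n using Nat.strong_induction_on with
  | _ n ih =>
    intro V _ _ _ hn
    rcases Nat.eq_zero_or_pos n with h0 | hpos
    · subst h0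
      have : Subsingleton V := finrank_zero_iff.1 hn
      have : Unique {D : End F V // IsNilpotent D} :=
        ⟨⟨⟨0, IsNilpotent.zero⟩⟩, fun D => Subtype.ext (LinearMap.ext fun x => Subsingleton.elim _ _)⟩
      simp
    · have : Nontrivial V := nontrivial_of_finrank_pos (R := F) (by omega)
      obtain ⟨x, hx⟩ := exists_ne (0 : V)
      have hli : LinearIndependent F (fun _ : Fin 1 => x) := linearIndependent_unique_iff.2 hx
      have h := card_nilpotent_chain (F := F) (V := V) (fun C hC => ih _ (hn ▸ hC) C rfl) (n - 1) 0
        (fun _ => x) hli (by omega)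
      simpa [hn] using h

/-- **The number of unipotent matrices in `GL_n(F_q)` is `q^{n² - n}`** (Steinberg): the
number of `g ∈ GL_n(F_q)` with `(g - 1)^n = 0` equals `q^{n² - n}`. -/
theorem card_unipotent (F : Type*) [Field F] [Fintype F] (q : ℕ)
    (hq : Fintype.card F = q) (n : ℕ) (hn : 1 ≤ n) :
    Nat.card {g : Matrix.GeneralLinearGroup (Fin n) F |
        ((g : Matrix (Fin n) (Fin n) F) - 1) ^ n = 0} = q ^ (n ^ 2 - n) := by
  have hnil : ∀ A : Matrix (Fin n) (Fin n) F, A ^ n = 0 ↔ IsNilpotent (Matrix.toLinAlgEquiv' A) := by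
    intro A
    constructor
    · intro h
      exact ⟨n, by rw [← map_pow, h, map_zero]⟩
    · intro h
      have := pow_finrank_eq_zero_of_isNilpotent h
      rw [Module.finrank_fin_fun, ← map_pow] at this
      exact (map_eq_zero_iff _ Matrix.toLinAlgEquiv'.injective).1 this
  let f : {g : Matrix.GeneralLinearGroup (Fin n) F |
      ((g : Matrix (Fin n) (Fin n) F) - 1) ^ n = 0} → {D : End F (Fin n → F) // IsNilpotent D} :=
    fun g => ⟨Matrix.toLinAlgEquiv' ((g.1 : Matrix (Fin n) (Fin n) F) - 1), (hnil _).1 g.2⟩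
  have hf : Function.Bijective f := by
    constructor
    · intro g h hgh
      have := Matrix.toLinAlgEquiv'.injective (congrArg Subtype.val hgh)
      exact Subtype.ext (Units.ext (sub_left_injective this))
    · rintro ⟨D, hD⟩
      obtain ⟨A, rfl⟩ := Matrix.toLinAlgEquiv'.surjective D
      have hA : A ^ n = 0 := (hnil A).2 hD
      have hu : IsUnit (A + 1) := IsNilpotent.isUnit_add_one ⟨n, hA⟩
      obtain ⟨g, hg⟩ := hu
      have hgA : (g : Matrix (Fin n) (Fin n) F) - 1 = A := by rw [hg]; simp
      refine ⟨⟨g, ?_⟩, Subtype.ext ?_⟩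
      · show ((g : Matrix (Fin n) (Fin n) F) - 1) ^ n = 0
        rw [hgA, hA]
      · show Matrix.toLinAlgEquiv' ((g : Matrix (Fin n) (Fin n) F) - 1) = _
        rw [hgA]
  rw [Nat.card_congr (Equiv.ofBijective f hf),
    card_nilpotent n (Fin n → F) (by simp), Nat.card_eq_fintype_card, hq]
  congr 1
  rw [Nat.mul_sub, mul_one, sq]
end

section
/- Let F_q be a finite field with q elements, let K be an algebraic closure of F_q, and let n ≥ 1. The number of conjugacy classes of GL_n(F_q) equals the number of functions Λ from K^× (the nonzero elements of K) to the set of partitions of nonnegative integers such that Λ(x) is the empty partition for all but finitely many x, Λ(x^q) = Λ(x) for every x ∈ K^×, and ∑_{x ∈ K^×} |Λ(x)| = n. -/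
/-!
Let `q = |F|`. Conjugacy classes of `GL_n(F)` are isomorphism classes of `F[X]`-modules of
`F`-dimension `n` on which `X` acts bijectively. By the structure theorem over the principal ideal
domain `F[X]` (`exists_hasType`), such a module is a direct sum of cyclic modules `F[X] / (p ^ e)`
with `p ≠ X` monic irreducible and `e ≥ 1`, so it is described by a finite multiset of pairs
`(p, e)`, called its *type*, with `∑ e * deg p = n`.

The type is determined by the module (`type_unique`): the kernel of `p ^ k` on `F[X] / (p' ^ e)` has
`q ^ (deg p * min k e)` elements if `p' = p` and one element otherwise, so counting the kernels of
all `p ^ k` gives the numbers `∑ min k e` over the pairs with first entry `p`, whose second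
differences in `k` are the multiplicities of the pairs `(p, k)`. Conversely every type of weight
`n` comes from an invertible matrix (`exists_hasType_of_weight`), and two matrices of the same type
are conjugate (`HasType.isConj`). This is `card_conjClasses`.

On the other side, two elements of `K^×` have the same minimal polynomial exactly when some power of
Frobenius carries one to the other (`exists_pow_of_mp_eq`), so a Frobenius-stable coloring of `K^×`
is a function of the minimal polynomial, that is, a type. The total sizes agree because an
irreducible `p` over the perfect field `F` has `deg p` distinct roots (`card_mp_fiber`). This is
`card_colorings`.
-/

namespace GLClasses

open Polynomial

/-- The monic irreducible polynomials over `F` other than `X`. -/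
abbrev Prm (F : Type*) [Field F] := {p : F[X] // p.Monic ∧ Irreducible p ∧ p ≠ X}

/-- A type is a finite multiset of pairs `(p, e)`, each of which stands for a cyclic summand
`F[X] / (p ^ e)`. -/
abbrev ElemType (F : Type*) [Field F] := Multiset (Prm F × ℕ+)

/-- The `F`-dimension of the `F[X]`-module described by a type. -/
noncomputable def weight {F : Type*} [Field F] (s : ElemType F) : ℕ :=
  (s.map fun d => (d.2 : ℕ) * d.1.1.natDegree).sum

/-! ### Types and colorings of `K^×` -/

section Coloring

variable {F : Type*} [Field F]

local notation "K" => AlgebraicClosure F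

/-- The minimal polynomial over `F` of a unit of the algebraic closure. -/
noncomputable def mp (x : (AlgebraicClosure F)ˣ) : Prm F :=
  ⟨minpoly F (x : K), minpoly.monic (Algebra.IsIntegral.isIntegral _),
    minpoly.irreducible (Algebra.IsIntegral.isIntegral _), fun h => by
      have := minpoly.aeval F (x : K)
      rw [h, aeval_X] at this
      exact x.ne_zero this⟩

theorem mp_eq_iff (x : (AlgebraicClosure F)ˣ) (p : Prm F) :
    mp x = p ↔ aeval (x : K) p.1 = 0 := by
  constructor
  · rintro rfl
    exact minpoly.aeval _ _
  · intro h
    exact Subtype.ext (minpoly.eq_of_irreducible_of_monic p.2.2.1 h p.2.1).symm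

theorem ne_zero_of_root (p : Prm F) {y : K} (h : aeval y p.1 = 0) : y ≠ 0 := by
  rintro rfl
  apply p.2.2.2
  have h1 := minpoly.eq_of_irreducible_of_monic p.2.2.1 h p.2.1
  rwa [minpoly.zero] at h1

theorem mp_surjective : Function.Surjective (mp : (AlgebraicClosure F)ˣ → Prm F) := by
  intro p
  obtain ⟨y, hy⟩ := IsAlgClosed.exists_aeval_eq_zero K p.1
    (Polynomial.degree_pos_of_irreducible p.2.2.1).ne'
  exact ⟨Units.mk0 y (ne_zero_of_root p hy), (mp_eq_iff _ _).2 hy⟩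

/-- Since `F` is perfect, an irreducible polynomial has as many roots as its degree. -/
theorem card_mp_fiber [Fintype F] (p : Prm F) :
    {x : (AlgebraicClosure F)ˣ | mp x = p}.Finite ∧
      {x : (AlgebraicClosure F)ˣ | mp x = p}.ncard = p.1.natDegree := by
  have himg : (fun x : (AlgebraicClosure F)ˣ => (x : K)) '' {x | mp x = p} = p.1.rootSet K := by
    ext y
    simp only [Set.mem_image, Set.mem_ofPred_eq, mem_rootSet, mp_eq_iff]
    constructor
    · rintro ⟨x, hx, rfl⟩
      exact ⟨p.2.1.ne_zero, hx⟩
    · rintro ⟨-, hy⟩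
      exact ⟨Units.mk0 y (ne_zero_of_root p hy), hy, rfl⟩
  have hinj : Function.Injective (fun x : (AlgebraicClosure F)ˣ => (x : K)) := Units.val_injective
  constructor
  · apply Set.Finite.of_finite_image _ hinj.injOn
    rw [himg]
    exact rootSet_finite _ _
  · rw [← Set.ncard_image_of_injective _ hinj, himg, ← Nat.card_coe_set_eq, Nat.card_eq_fintype_card]
    exact card_rootSet_eq_natDegree (PerfectField.separable_of_irreducible p.2.2.1)
      (IsAlgClosed.splits _)

theorem mp_pow [Fintype F] (x : (AlgebraicClosure F)ˣ) : mp (x ^ Fintype.card F) = mp x := by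
  apply Subtype.ext
  have := minpoly.algEquiv_eq (FiniteField.frobeniusAlgEquivOfAlgebraic F K) (x : K)
  simpa [mp] using this

/-- Two elements with the same minimal polynomial are linked by a power of Frobenius. -/
theorem exists_pow_of_mp_eq [Fintype F] {x y : (AlgebraicClosure F)ˣ} (h : mp x = mp y) :
    ∃ k : ℕ, x = y ^ (Fintype.card F ^ k) := by
  let E := IntermediateField.adjoin F {(x : K), (y : K)}
  have : FiniteDimensional F E := by
    apply IntermediateField.finiteDimensional_adjoin
    intro z _
    exact Algebra.IsIntegral.isIntegral z
  have : Finite E := Module.finite_of_finite F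
  let x' : E := ⟨x, IntermediateField.subset_adjoin _ _ (by simp)⟩
  let y' : E := ⟨y, IntermediateField.subset_adjoin _ _ (by simp)⟩
  have hc : IsConjRoot F x' y' := by
    rw [← isConjRoot_algHom_iff E.val]
    exact congrArg Subtype.val h
  obtain ⟨σ, hσ⟩ := hc.exists_algEquiv
  obtain ⟨k, hk⟩ := (FiniteField.bijective_frobeniusAlgEquivOfAlgebraic_pow F E).2 σ
  refine ⟨k, ?_⟩
  rw [← hk] at hσ
  dsimp only at hσ
  rw [AlgEquiv.coe_pow, FiniteField.coe_frobeniusAlgEquivOfAlgebraic_iterate] at hσ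
  apply Units.ext
  simpa using (congrArg Subtype.val hσ).symm

open Classical in
/-- The parts at `p` of a type. -/
noncomputable def partsAt (s : ElemType F) (p : Prm F) : Multiset ℕ :=
  (s.filter fun d => d.1 = p).map fun d => (d.2 : ℕ)

/-- The coloring of `K^×` attached to a type: at `x` it is the partition formed by the parts at the
minimal polynomial of `x`. -/
noncomputable def coloring (s : ElemType F) (x : (AlgebraicClosure F)ˣ) : Σ m : ℕ, m.Partition :=
  ⟨(partsAt s (mp x)).sum, partsAt s (mp x), by
    intro i hi
    obtain ⟨d, -, rfl⟩ := Multiset.mem_map.1 hi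
    exact d.2.pos, rfl⟩

theorem sigma_partition_ext {a b : Σ m : ℕ, m.Partition} (h : a.2.parts = b.2.parts) : a = b := by
  obtain ⟨m, a⟩ := a
  obtain ⟨k, b⟩ := b
  have : m = k := by rw [← a.parts_sum, ← b.parts_sum]; exact congrArg _ h
  subst this
  congr 1
  exact Nat.Partition.ext h

theorem partsAt_count (s : ElemType F) (p : Prm F) (e : ℕ+) [DecidableEq (Prm F × ℕ+)] :
    (partsAt s p).count (e : ℕ) = s.count (p, e) := by
  classical
  induction s using Multiset.induction_on with
  | empty => simp [partsAt]
  | cons d s ih =>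
    obtain ⟨p', e'⟩ := d
    by_cases hp : p' = p
    · subst hp
      have h1 : partsAt ((p', e') ::ₘ s) p' = (e' : ℕ) ::ₘ partsAt s p' := by
        simp [partsAt]
      rw [h1, Multiset.count_cons, Multiset.count_cons, ih]
      simp
    · have h1 : partsAt ((p', e') ::ₘ s) p = partsAt s p := by
        simp [partsAt, hp]
      rw [h1, ih, Multiset.count_cons_of_ne]
      simp [Ne.symm hp]

theorem coloring_injective : Function.Injective (coloring : ElemType F → _) := by
  classical
  intro s t h
  ext ⟨p, e⟩
  obtain ⟨x, rfl⟩ := mp_surjective p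
  rw [← partsAt_count, ← partsAt_count]
  have h1 : ∀ s : ElemType F, (coloring s x).2.parts = partsAt s (mp x) := fun _ => rfl
  rw [← h1, ← h1, h]

theorem coloring_sum [Fintype F] (s : ElemType F) :
    {x : (AlgebraicClosure F)ˣ | (coloring s x).1 ≠ 0}.Finite ∧
      ∑ᶠ x : (AlgebraicClosure F)ˣ, (coloring s x).1 = weight s := by
  classical
  induction s using Multiset.induction_on with
  | empty => simp [coloring, partsAt, weight]
  | cons d s ih =>
    have h1 : ∀ x, (coloring (d ::ₘ s) x).1 = (if mp x = d.1 then (d.2 : ℕ) else 0) +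
        (coloring s x).1 := by
      intro x
      by_cases hp : d.1 = mp x
      · simp [coloring, partsAt, hp]
      · simp [coloring, partsAt, hp, Ne.symm hp]
    have h2 : (Function.support fun x : (AlgebraicClosure F)ˣ =>
        if mp x = d.1 then (d.2 : ℕ) else 0) = {x | mp x = d.1} := by
      ext x
      simp
    obtain ⟨hf, hcard⟩ := card_mp_fiber d.1
    have h3 : (Function.support fun x : (AlgebraicClosure F)ˣ =>
        if mp x = d.1 then (d.2 : ℕ) else 0).Finite := h2 ▸ hf
    constructor
    · refine (h3.union ih.1).subset fun x hx => ?_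
      simp only [Set.mem_ofPred_eq, h1] at hx
      simp only [Set.mem_union, Function.mem_support, Set.mem_ofPred_eq]
      omega
    · simp_rw [h1]
      rw [finsum_add_distrib h3 ih.1, ih.2]
      have h4 : weight (d ::ₘ s) = d.2 * d.1.1.natDegree + weight s := by simp [weight]
      rw [h4, ← hcard]
      congr 1
      rw [finsum_eq_sum_of_support_subset _ (s := hf.toFinset) (by rw [h2]; simp),
        Finset.sum_congr rfl (g := fun _ => (d.2 : ℕ)) (by
          intro x hx
          simp only [Set.Finite.mem_toFinset, Set.mem_ofPred_eq] at hx
          simp [hx]), Finset.sum_const, smul_eq_mul, mul_comm, Set.ncard_eq_toFinset_card _ hf]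

theorem coloring_pow [Fintype F] (s : ElemType F) (x : (AlgebraicClosure F)ˣ) :
    coloring s (x ^ Fintype.card F) = coloring s x := by
  exact sigma_partition_ext (congrArg (partsAt s) (mp_pow x))

/-- The type is assembled from the values of `Λ` at one chosen root of each irreducible polynomial
that has a root in the support of `Λ`. -/
theorem coloring_surj [Fintype F] (Λ : (AlgebraicClosure F)ˣ → Σ m : ℕ, m.Partition)
    (hfin : {x : (AlgebraicClosure F)ˣ | (Λ x).1 ≠ 0}.Finite)
    (hinv : ∀ x : (AlgebraicClosure F)ˣ, Λ (x ^ Fintype.card F) = Λ x) :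
    ∃ s : ElemType F, coloring s = Λ := by
  classical
  have hpow : ∀ (k : ℕ) (x : (AlgebraicClosure F)ˣ), Λ (x ^ (Fintype.card F ^ k)) = Λ x := by
    intro k
    induction k with
    | zero => simp
    | succ k ih => intro x; rw [pow_succ, pow_mul, hinv, ih]
  have hmp : ∀ x y : (AlgebraicClosure F)ˣ, mp x = mp y → Λ x = Λ y := by
    intro x y h
    obtain ⟨k, rfl⟩ := exists_pow_of_mp_eq h
    rw [hpow]
  choose r hr using (mp_surjective : Function.Surjective (mp : (AlgebraicClosure F)ˣ → Prm F))
  let S : Finset (Prm F) := hfin.toFinset.image mp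
  let s : ElemType F := ∑ p ∈ S, ((Λ (r p)).2.parts.map fun e => (p, e.toPNat'))
  have key : ∀ p : Prm F, partsAt s p = (Λ (r p)).2.parts := by
    intro p
    have h1 : partsAt s p = ∑ p' ∈ S,
        partsAt ((Λ (r p')).2.parts.map fun e => (p', e.toPNat')) p := by
      let φ : ElemType F →+ Multiset ℕ :=
        { toFun := fun s => partsAt s p
          map_zero' := by simp [partsAt]
          map_add' := by intro a b; simp [partsAt] }
      exact map_sum φ _ _
    have h2 : ∀ p', partsAt ((Λ (r p')).2.parts.map fun e => (p', e.toPNat')) p =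
        if p' = p then (Λ (r p)).2.parts else 0 := by
      intro p'
      split_ifs with h
      · subst h
        simp only [partsAt, Multiset.filter_map, Multiset.map_map, Function.comp_def]
        simp only [Multiset.filter_true]
        conv_rhs => rw [← Multiset.map_id (Λ (r p')).2.parts]
        apply Multiset.map_congr rfl
        intro e he
        have := (Λ (r p')).2.parts_pos he
        simp only [Nat.toPNat'_coe, this, if_true, id]
      · simp [partsAt, Multiset.filter_map, h]
    rw [h1]
    simp_rw [h2]
    rw [Finset.sum_ite_eq']
    split_ifs with h
    · rfl
    · have h0 : (Λ (r p)).1 = 0 := by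
        by_contra hne
        apply h
        rw [← hr p]
        exact Finset.mem_image_of_mem _ (by simpa using hne)
      have := (Λ (r p)).2.parts_sum
      symm
      rw [Multiset.eq_zero_iff_forall_notMem]
      intro e he
      have h5 := Multiset.le_sum_of_mem he
      have h6 := (Λ (r p)).2.parts_pos he
      omega
  refine ⟨s, funext fun x => sigma_partition_ext ?_⟩
  change partsAt s (mp x) = _
  rw [key, hmp (r (mp x)) x (hr _)]

end Coloring

/-! ### The module of a type -/

section Modules

variable {F : Type*} [Field F]

/-- The cyclic module `F[X] / (p ^ e)`. -/
abbrev Cyc (d : Prm F × ℕ+) := F[X] ⧸ Ideal.span {d.1.1 ^ (d.2 : ℕ)}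

theorem Prm.isCoprime {p p' : Prm F} (h : p ≠ p') : IsCoprime p.1 p'.1 := by
  rw [p.2.2.1.coprime_iff_not_dvd]
  intro hd
  apply h
  apply Subtype.ext
  exact eq_of_monic_of_associated p.2.1 p'.2.1 (p.2.2.1.associated_of_dvd p'.2.2.1 hd)

theorem Prm.isCoprime_X (p : Prm F) : IsCoprime X p.1 := by
  rw [irreducible_X.coprime_iff_not_dvd]
  intro hd
  apply p.2.2.2
  exact (eq_of_monic_of_associated monic_X p.2.1 (irreducible_X.associated_of_dvd p.2.2.1 hd)).symm

theorem smul_mk_eq_zero_iff (f a b : F[X]) :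
    a • (Ideal.Quotient.mk (Ideal.span {f}) b) = 0 ↔ f ∣ a * b := by
  rw [← Ideal.mem_span_singleton, ← Ideal.Quotient.eq_zero_iff_mem]
  rfl

theorem smul_inj_of_coprime {f a : F[X]} (h : IsCoprime a f) (m : F[X] ⧸ Ideal.span {f})
    (hm : a • m = 0) : m = 0 := by
  obtain ⟨b, rfl⟩ := Ideal.Quotient.mk_surjective m
  rw [smul_mk_eq_zero_iff] at hm
  rw [Ideal.Quotient.eq_zero_iff_mem, Ideal.mem_span_singleton]
  exact h.symm.dvd_of_dvd_mul_left hm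

theorem card_quot [Fintype F] {f : F[X]} (hf : f ≠ 0) :
    Nat.card (F[X] ⧸ Ideal.span {f}) = Fintype.card F ^ f.natDegree := by
  have : Module.Finite F (F[X] ⧸ Ideal.span {f}) := (AdjoinRoot.powerBasis hf).finite
  rw [Module.natCard_eq_pow_finrank (K := F), finrank_quotient_span_eq_natDegree,
    Nat.card_eq_fintype_card]

instance cyc_finite_module (d : Prm F × ℕ+) : Module.Finite F (Cyc d) :=
  (AdjoinRoot.powerBasis (pow_ne_zero _ d.1.2.1.ne_zero)).finite

/-- The kernel of `p ^ k` on `F[X] / (p ^ e)` is generated by `p ^ (e - k)`, hence isomorphic to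
`F[X] / (p ^ min k e)`. -/
theorem card_torsion_same [Fintype F] (d : Prm F × ℕ+) (k : ℕ) :
    Nat.card {m : Cyc d // d.1.1 ^ k • m = 0} =
      Fintype.card F ^ (d.1.1.natDegree * min k d.2) := by
  obtain ⟨p, e⟩ := d
  dsimp only
  have hp0 : p.1 ≠ 0 := p.2.1.ne_zero
  let φ : F[X] →ₗ[F[X]] Cyc (p, e) :=
    LinearMap.toSpanSingleton F[X] _ (Ideal.Quotient.mk _ (p.1 ^ ((e : ℕ) - k)))
  have hφ : ∀ r, φ r = Ideal.Quotient.mk _ (r * p.1 ^ ((e : ℕ) - k)) := fun r => rfl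
  have hker : LinearMap.ker φ = Ideal.span {p.1 ^ min k e} := by
    ext r
    rw [LinearMap.mem_ker, hφ, Ideal.Quotient.eq_zero_iff_mem, Ideal.mem_span_singleton,
      Ideal.mem_span_singleton]
    dsimp only
    have he : p.1 ^ (e : ℕ) = p.1 ^ min k e * p.1 ^ ((e : ℕ) - k) := by
      rw [← pow_add]; congr 1; omega
    rw [he, mul_dvd_mul_iff_right (pow_ne_zero _ hp0)]
  have hrange : ∀ m, m ∈ LinearMap.range φ ↔ p.1 ^ k • m = 0 := by
    intro m
    obtain ⟨b, rfl⟩ := Ideal.Quotient.mk_surjective m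
    rw [smul_mk_eq_zero_iff]
    dsimp only
    constructor
    · rintro ⟨r, hr⟩
      rw [← smul_mk_eq_zero_iff, ← hr, hφ, smul_mk_eq_zero_iff]
      refine Dvd.dvd.trans (pow_dvd_pow p.1 (m := e) (n := k + ((e : ℕ) - k)) (by omega)) ⟨r, ?_⟩
      ring
    · intro h
      have hb : p.1 ^ ((e : ℕ) - k) ∣ b := by
        rcases le_total k e with hk | hk
        · have he : p.1 ^ (e : ℕ) = p.1 ^ k * p.1 ^ ((e : ℕ) - k) := by
            rw [← pow_add]; congr 1; omega
          rw [he] at h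
          exact (mul_dvd_mul_iff_left (pow_ne_zero _ hp0)).1 h
        · rw [Nat.sub_eq_zero_of_le hk, pow_zero]
          exact one_dvd _
      obtain ⟨r, rfl⟩ := hb
      exact ⟨r, by rw [hφ, mul_comm]⟩
  calc Nat.card {m : Cyc (p, e) // p.1 ^ k • m = 0}
      = Nat.card (LinearMap.range φ) :=
        Nat.card_congr (Equiv.subtypeEquivRight fun m => (hrange m).symm)
    _ = Nat.card (F[X] ⧸ LinearMap.ker φ) := Nat.card_congr φ.quotKerEquivRange.symm.toEquiv
    _ = Nat.card (F[X] ⧸ Ideal.span {p.1 ^ min k (e : ℕ)}) := by rw [hker]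
    _ = _ := by rw [card_quot (pow_ne_zero _ hp0), natDegree_pow, mul_comm]

theorem card_torsion_ne (d : Prm F × ℕ+) (p : Prm F) (h : d.1 ≠ p) (k : ℕ) :
    Nat.card {m : Cyc d // p.1 ^ k • m = 0} = 1 := by
  rw [Nat.card_eq_one_iff_unique]
  refine ⟨⟨?_⟩, ⟨⟨0, smul_zero _⟩⟩⟩
  rintro ⟨a, ha⟩ ⟨b, hb⟩
  have hc : IsCoprime (p.1 ^ k) (d.1.1 ^ (d.2 : ℕ)) := (Prm.isCoprime h.symm).pow
  rw [Subtype.mk.injEq, smul_inj_of_coprime hc a ha, smul_inj_of_coprime hc b hb]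

/-- The module of a finite family of pairs `(p, e)`. -/
abbrev FamMod {ι : Type*} (f : ι → Prm F × ℕ+) := ∀ i, Cyc (f i)

open Classical in
/-- The number `∑ min k e` over the pairs `(p, e)` of a type with prescribed `p`. -/
noncomputable def minSum (s : ElemType F) (p : Prm F) (k : ℕ) : ℕ :=
  (s.map fun d => if d.1 = p then min k (d.2 : ℕ) else 0).sum

theorem card_torsion_fam [Fintype F] {ι : Type*} [Fintype ι] (f : ι → Prm F × ℕ+) (p : Prm F)
    (k : ℕ) : Nat.card {m : FamMod f // p.1 ^ k • m = 0} =
      Fintype.card F ^ (p.1.natDegree * minSum (Finset.univ.val.map f) p k) := by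
  classical
  have e : {m : FamMod f // p.1 ^ k • m = 0} ≃ ∀ i, {m : Cyc (f i) // p.1 ^ k • m = 0} :=
    (Equiv.subtypeEquivRight (q := fun m : FamMod f => ∀ i, p.1 ^ k • m i = 0)
      fun m => funext_iff).trans
      (Equiv.subtypePiEquivPi (p := fun i (m : Cyc (f i)) => p.1 ^ k • m = 0))
  rw [Nat.card_congr e, Nat.card_pi]
  have h : ∀ i, Nat.card {m : Cyc (f i) // p.1 ^ k • m = 0} =
      Fintype.card F ^ (p.1.natDegree * if (f i).1 = p then min k ((f i).2 : ℕ) else 0) := by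
    intro i
    split_ifs with hi
    · rw [← hi, card_torsion_same]
    · rw [card_torsion_ne _ _ hi, mul_zero, pow_zero]
  simp_rw [h]
  rw [Finset.prod_pow_eq_pow_sum, ← Finset.mul_sum, minSum, Multiset.map_map]
  rfl

theorem card_fam [Fintype F] {ι : Type*} [Fintype ι] (f : ι → Prm F × ℕ+) :
    Nat.card (FamMod f) = Fintype.card F ^ weight (Finset.univ.val.map f) := by
  rw [Nat.card_pi]
  have h : ∀ i, Nat.card (Cyc (f i)) =
      Fintype.card F ^ (((f i).2 : ℕ) * (f i).1.1.natDegree) := by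
    intro i
    rw [card_quot (pow_ne_zero _ (f i).1.2.1.ne_zero), natDegree_pow]
  simp_rw [h]
  rw [Finset.prod_pow_eq_pow_sum, weight, Multiset.map_map]
  rfl

/-- Multiplicities in a type are second differences of `minSum`. -/
theorem count_eq_minSum (s : ElemType F) (p : Prm F) (e : ℕ+) [DecidableEq (Prm F × ℕ+)] :
    minSum s p (e - 1) + minSum s p (e + 1) + s.count (p, e) = 2 * minSum s p e := by
  classical
  induction s using Multiset.induction_on with
  | empty => simp [minSum]
  | cons d s ih =>
    obtain ⟨p', e'⟩ := d
    have h1 : ∀ k, minSum ((p', e') ::ₘ s) p k = (if p' = p then min k (e' : ℕ) else 0) +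
        minSum s p k := by
      intro k
      simp [minSum]
    simp only [h1, Multiset.count_cons, Prod.mk.injEq]
    have hpos := e.pos
    have he : e = e' ↔ (e : ℕ) = e' := PNat.coe_inj.symm
    by_cases hp : p' = p
    · subst hp
      simp only [if_true, true_and, he]
      split_ifs <;> omega
    · simp only [hp, Ne.symm hp, if_false, false_and]
      omega

/-- Families with isomorphic modules define the same type, since isomorphic modules have equally
large `p ^ k`-torsion. -/
theorem type_unique [Fintype F] {ι κ : Type*} [Fintype ι] [Fintype κ] (f : ι → Prm F × ℕ+)
    (g : κ → Prm F × ℕ+) (φ : FamMod f ≃ₗ[F[X]] FamMod g) :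
    Finset.univ.val.map f = Finset.univ.val.map g := by
  classical
  have h : ∀ p k, minSum (Finset.univ.val.map f) p k = minSum (Finset.univ.val.map g) p k := by
    intro p k
    have hc : Nat.card {m : FamMod f // p.1 ^ k • m = 0} =
        Nat.card {m : FamMod g // p.1 ^ k • m = 0} :=
      Nat.card_congr (φ.toEquiv.subtypeEquiv fun m => by
        rw [← φ.map_eq_zero_iff, map_smul]; rfl)
    rw [card_torsion_fam, card_torsion_fam] at hc
    have h1 := Nat.pow_right_injective (Fintype.one_lt_card (α := F)) hc
    exact Nat.eq_of_mul_eq_mul_left p.2.2.1.natDegree_pos h1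
  ext ⟨p, e⟩
  have h1 := count_eq_minSum (Finset.univ.val.map f) p e
  have h2 := count_eq_minSum (Finset.univ.val.map g) p e
  simp only [h] at h1
  omega

theorem exists_reindex {ι κ D : Type*} [Fintype ι] [Fintype κ] (f : ι → D) (g : κ → D)
    (h : Finset.univ.val.map f = Finset.univ.val.map g) : ∃ σ : ι ≃ κ, ∀ i, g (σ i) = f i := by
  classical
  have hc : ∀ c, Nonempty ({a // f a = c} ≃ {b // g b = c}) := by
    intro c
    rw [← Fintype.card_eq, Fintype.card_subtype, Fintype.card_subtype]
    have := congrArg (Multiset.count c) h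
    rw [Multiset.count_map, Multiset.count_map] at this
    simpa [Finset.card, eq_comm] using this
  exact ⟨Equiv.ofFiberEquiv fun c => (hc c).some, fun i => Equiv.ofFiberEquiv_map _ i⟩

theorem exists_famMod_equiv {ι κ : Type*} [Fintype ι] [Fintype κ] (f : ι → Prm F × ℕ+)
    (g : κ → Prm F × ℕ+) (h : Finset.univ.val.map f = Finset.univ.val.map g) :
    Nonempty (FamMod f ≃ₗ[F[X]] FamMod g) := by
  obtain ⟨σ, hσ⟩ := exists_reindex f g h
  have hf : f = fun i => g (σ i) := funext fun i => (hσ i).symm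
  subst hf
  exact ⟨LinearEquiv.piCongrLeft F[X] (fun j => Cyc (g j)) σ⟩

end Modules

/-! ### Conjugacy classes, types and the two counts -/

section Classes

variable {F : Type*} [Field F]

open Matrix

/-- An `F`-linear isomorphism commuting with the action of `X`, as an `F[X]`-linear one. -/
noncomputable def upgrade {M N : Type*} [AddCommGroup M] [AddCommGroup N] [Module F M] [Module F N]
    [Module F[X] M] [Module F[X] N] [IsScalarTower F F[X] M] [IsScalarTower F F[X] N]
    (ψ : M ≃ₗ[F] N) (h : ∀ m, ψ ((X : F[X]) • m) = (X : F[X]) • ψ m) : M ≃ₗ[F[X]] N :=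
  { ψ with
    map_smul' := by
      intro f m
      change ψ (f • m) = f • ψ m
      induction f using Polynomial.induction_on' generalizing m with
      | add a b ha hb => rw [add_smul, add_smul, map_add, ha, hb]
      | monomial k a =>
        rw [← smul_X_eq_monomial, smul_assoc, smul_assoc, map_smul]
        congr 1
        induction k generalizing m with
        | zero => simp
        | succ k ih => rw [pow_succ, mul_smul, mul_smul, ih, h] }

open Classical in
/-- The `F[X]`-module of a type. -/
abbrev TMod (s : ElemType F) := FamMod (fun i : s => (i : Prm F × ℕ+))

/-- `g` has type `s` if `F^n`, with `X` acting as `g`, is isomorphic to the module of `s`. -/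
def HasType {n : ℕ} (g : GL (Fin n) F) (s : ElemType F) : Prop :=
  ∃ φ : (Fin n → F) ≃ₗ[F] TMod s, ∀ v, φ (g.1 *ᵥ v) = (X : F[X]) • φ v

theorem HasType.isConj {n : ℕ} {g h : GL (Fin n) F} {s : ElemType F} (hg : HasType g s)
    (hh : HasType h s) : IsConj g h := by
  obtain ⟨φ, hφ⟩ := hg
  obtain ⟨χ, hχ⟩ := hh
  let θ : (Fin n → F) ≃ₗ[F] (Fin n → F) := φ.trans χ.symm
  have hθ : ∀ v, θ (g.1 *ᵥ v) = h.1 *ᵥ θ v := by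
    intro v
    apply χ.injective
    rw [hχ]
    simp [θ, hφ]
  let c : GL (Fin n) F :=
    ⟨LinearMap.toMatrix' θ.toLinearMap, LinearMap.toMatrix' θ.symm.toLinearMap,
      by rw [← LinearMap.toMatrix'_comp]; simp, by rw [← LinearMap.toMatrix'_comp]; simp⟩
  have hc : ∀ v, c.1 *ᵥ v = θ v := fun v => LinearMap.toMatrix'_mulVec _ _
  rw [isConj_iff]
  refine ⟨c, ?_⟩
  rw [mul_inv_eq_iff_eq_mul]
  apply Units.ext
  apply Matrix.ext_of_mulVec_single
  intro i
  rw [Units.val_mul, Units.val_mul, ← mulVec_mulVec, ← mulVec_mulVec, hc, hc, hθ]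

theorem HasType.unique [Fintype F] {n : ℕ} {g h : GL (Fin n) F} {s t : ElemType F}
    (hg : HasType g s) (hh : HasType h t) (hc : IsConj g h) : s = t := by
  classical
  obtain ⟨φ, hφ⟩ := hg
  obtain ⟨χ, hχ⟩ := hh
  obtain ⟨c, hc⟩ := isConj_iff.1 hc
  rw [mul_inv_eq_iff_eq_mul] at hc
  let θ : (Fin n → F) ≃ₗ[F] (Fin n → F) :=
    LinearEquiv.ofLinearMap (toLin' c.1) (toLin' c⁻¹.1)
      (by rw [← toLin'_mul, ← Units.val_mul, mul_inv_cancel]; simp)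
      (by rw [← toLin'_mul, ← Units.val_mul, inv_mul_cancel]; simp)
  have hθ : ∀ v, θ (g.1 *ᵥ v) = h.1 *ᵥ θ v := by
    intro v
    change c.1 *ᵥ (g.1 *ᵥ v) = h.1 *ᵥ (c.1 *ᵥ v)
    rw [mulVec_mulVec, mulVec_mulVec, ← Units.val_mul, ← Units.val_mul, hc]
  have key := type_unique _ _ (upgrade ((φ.symm.trans θ).trans χ) (by
    intro m
    obtain ⟨v, rfl⟩ := φ.surjective m
    rw [← hφ]
    simp [hθ, hχ]))
  rwa [Multiset.map_univ_coe, Multiset.map_univ_coe] at key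

/-- Compare the cardinalities of `F^n` and of the module of `s`. -/
theorem HasType.weight_eq [Fintype F] {n : ℕ} {g : GL (Fin n) F} {s : ElemType F}
    (hg : HasType g s) : weight s = n := by
  classical
  obtain ⟨φ, -⟩ := hg
  have h := Nat.card_congr φ.toEquiv
  rw [card_fam, Multiset.map_univ_coe, Nat.card_fun, Nat.card_eq_fintype_card, Nat.card_fin] at h
  exact (Nat.pow_right_injective (Fintype.one_lt_card (α := F)) h).symm

/-- The matrix of multiplication by `X` in an `F`-basis of the module of `s`; it is invertible since
`X` is coprime to every `p` occurring in `s`. -/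
theorem exists_hasType_of_weight [Fintype F] {n : ℕ} (s : ElemType F) (hs : weight s = n) :
    ∃ g : GL (Fin n) F, HasType g s := by
  classical
  have hfr : Module.finrank F (TMod s) = n := by
    have h := Module.natCard_eq_pow_finrank (K := F) (V := TMod s)
    rw [card_fam, Multiset.map_univ_coe, Nat.card_eq_fintype_card, hs] at h
    exact (Nat.pow_right_injective (Fintype.one_lt_card (α := F)) h).symm
  let φ : (Fin n → F) ≃ₗ[F] TMod s := LinearEquiv.ofFinrankEq _ _ (by simp [hfr])
  let T : (Fin n → F) →ₗ[F] (Fin n → F) :=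
    φ.symm.toLinearMap ∘ₗ (Algebra.lsmul F F (TMod s) (X : F[X])) ∘ₗ φ.toLinearMap
  have hT : ∀ v, φ (T v) = (X : F[X]) • φ v := by
    intro v
    simp [T]
  have hinj : LinearMap.ker T = ⊥ := by
    rw [LinearMap.ker_eq_bot']
    intro v hv
    have h1 := hT v
    rw [hv, map_zero] at h1
    rw [← φ.map_eq_zero_iff]
    funext i
    have h2 : (X : F[X]) • φ v i = 0 := (congrFun h1 i).symm
    exact smul_inj_of_coprime ((Prm.isCoprime_X _).pow_right) _ h2
  let T' := LinearEquiv.ofInjectiveEndo T (LinearMap.ker_eq_bot.1 hinj)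
  have hT' : T'.toLinearMap = T := by ext; rfl
  refine ⟨⟨LinearMap.toMatrix' T'.toLinearMap, LinearMap.toMatrix' T'.symm.toLinearMap,
      by rw [← LinearMap.toMatrix'_comp]; simp, by rw [← LinearMap.toMatrix'_comp]; simp⟩, φ, ?_⟩
  intro v
  dsimp only
  rw [LinearMap.toMatrix'_mulVec, hT', hT]

theorem exists_hasType {F : Type*} [Field F] [Fintype F] {n : ℕ} (g : GL (Fin n) F) :
    ∃ s : ElemType F, HasType g s := by
  classical
  let T : (Fin n → F) →ₗ[F] (Fin n → F) := toLin' g.1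
  let M := Module.AEval' T
  have htor : Module.IsTorsion F[X] M := by
    intro m
    refine ⟨⟨minpoly F T, mem_nonZeroDivisors_of_ne_zero
      (minpoly.ne_zero (Algebra.IsIntegral.isIntegral T))⟩, ?_⟩
    apply (Module.AEval'.of T).symm.injective
    change (Module.AEval.of F (Fin n → F) T).symm (minpoly F T • m) = _
    rw [Module.AEval.of_symm_smul, minpoly.aeval]
    simp
  obtain ⟨ι, _, p, hp, e, ⟨ψ⟩⟩ := Module.equiv_directSum_of_isTorsion htor
  let ψ' : M ≃ₗ[F[X]] ∀ i, F[X] ⧸ Submodule.span F[X] {p i ^ e i} :=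
    ψ.trans (DirectSum.linearEquivFunOnFintype F[X] ι _)
  -- `X` acts injectively on `M` because `g` is invertible.
  have hX : ∀ m : M, (X : F[X]) • m = 0 → m = 0 := by
    intro m hm
    have h1 := Module.AEval'.of_symm_X_smul T m
    rw [hm, map_zero] at h1
    rw [← (Module.AEval'.of T).symm.map_eq_zero_iff]
    have h2 : g.1 *ᵥ ((Module.AEval'.of T).symm m) = 0 := h1.symm
    have h3 := congrArg (g⁻¹.1 *ᵥ ·) h2
    rwa [mulVec_mulVec, ← Units.val_mul, inv_mul_cancel, mulVec_zero, Units.val_one,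
      one_mulVec] at h3
  have hpX : ∀ i, e i ≠ 0 → ¬ (p i ∣ X) := by
    intro i hi hd
    let z : ∀ i, F[X] ⧸ Submodule.span F[X] {p i ^ e i} :=
      Pi.single i (Ideal.Quotient.mk (Ideal.span {p i ^ e i}) (p i ^ (e i - 1)))
    have hz : (X : F[X]) • z = 0 := by
      rw [← Pi.single_smul]
      have : (X : F[X]) • (Ideal.Quotient.mk (Ideal.span {p i ^ e i}) (p i ^ (e i - 1))) = 0 := by
        rw [smul_mk_eq_zero_iff]
        calc p i ^ e i = p i * p i ^ (e i - 1) := by rw [← pow_succ']; congr 1; omega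
          _ ∣ _ := mul_dvd_mul_right hd _
      exact (congrArg _ this).trans (Pi.single_zero i)
    have h0 : z = 0 := by
      have := hX (ψ'.symm z) (by rw [← map_smul, hz, map_zero])
      simpa using this
    have h1 := congrFun h0 i
    simp only [z, Pi.single_eq_same] at h1
    have h2 : p i ^ e i ∣ p i ^ (e i - 1) :=
      Ideal.mem_span_singleton.1 (Ideal.Quotient.eq_zero_iff_mem.1 h1)
    rw [pow_dvd_pow_iff (hp i).ne_zero (hp i).not_isUnit] at h2
    omega
  let f : {i // e i ≠ 0} → Prm F × ℕ+ := fun i =>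
    (⟨normalize (p i), monic_normalize (hp i).ne_zero,
      (normalize_associated (p i)).symm.irreducible (hp i), fun h => hpX i i.2 (by
        rw [← h]; exact (normalize_associated (p i)).symm.dvd)⟩, ⟨e i, Nat.pos_of_ne_zero i.2⟩)
  have hspan : ∀ i : {i // e i ≠ 0}, Submodule.span F[X] {p i.1 ^ e i.1} =
      Ideal.span {(f i).1.1 ^ ((f i).2 : ℕ)} := fun i =>
    Ideal.span_singleton_eq_span_singleton.2 ((normalize_associated (p i)).symm.pow_pow)
  -- Summands with exponent zero vanish and may be dropped.
  let res : (∀ i, F[X] ⧸ Submodule.span F[X] {p i ^ e i}) →ₗ[F[X]]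
      ∀ i : {i // e i ≠ 0}, F[X] ⧸ Submodule.span F[X] {p i.1 ^ e i.1} :=
    LinearMap.pi fun i => LinearMap.proj i.1
  have hsub : ∀ i, e i = 0 → Subsingleton (F[X] ⧸ Submodule.span F[X] {p i ^ e i}) := by
    intro i hi
    rw [Submodule.Quotient.subsingleton_iff, hi, pow_zero]
    exact Ideal.span_singleton_one
  have hres : Function.Bijective res := by
    constructor
    · intro a b hab
      funext i
      by_cases hi : e i = 0
      · have := hsub i hi
        exact Subsingleton.elim _ _
      · exact congrFun hab ⟨i, hi⟩
    · intro b
      refine ⟨fun i => if hi : e i ≠ 0 then b ⟨i, hi⟩ else 0, ?_⟩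
      funext i
      simp [res, i.2]
  let ρ : M ≃ₗ[F[X]] FamMod f := (ψ'.trans (LinearEquiv.ofBijective res hres)).trans
    (LinearEquiv.piCongrRight fun i => Submodule.quotEquivOfEq _ _ (hspan i))
  obtain ⟨τ⟩ := exists_famMod_equiv f
    (fun i : (Finset.univ.val.map f : ElemType F) => (i : Prm F × ℕ+))
    (by rw [Multiset.map_univ_coe])
  refine ⟨Finset.univ.val.map f,
    (Module.AEval'.of T).trans ((ρ.trans τ).restrictScalars F), fun v => ?_⟩
  have h1 : Module.AEval'.of T (g.1 *ᵥ v) = (X : F[X]) • Module.AEval'.of T v :=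
    (Module.AEval'.X_smul_of T v).symm
  change (ρ.trans τ) (Module.AEval'.of T (g.1 *ᵥ v)) = X • (ρ.trans τ) (Module.AEval'.of T v)
  rw [h1, map_smul]

/-- Conjugacy classes are classified by types of weight `n`. -/
theorem card_conjClasses [Fintype F] (n : ℕ) :
    Nat.card {s : ElemType F // weight s = n} = Nat.card (ConjClasses (GL (Fin n) F)) := by
  choose g hg using fun s : {s : ElemType F // weight s = n} => exists_hasType_of_weight s.1 s.2
  refine Nat.card_congr (Equiv.ofBijective (fun s => ConjClasses.mk (g s)) ⟨?_, ?_⟩)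
  · intro s t h
    exact Subtype.ext ((hg s).unique (hg t) (ConjClasses.mk_eq_mk_iff_isConj.1 h))
  · intro c
    obtain ⟨h, rfl⟩ := ConjClasses.exists_rep c
    obtain ⟨s, hs⟩ := exists_hasType h
    exact ⟨⟨s, hs.weight_eq⟩, ConjClasses.mk_eq_mk_iff_isConj.2 ((hg _).isConj hs)⟩

/-- Types of weight `n` are the Frobenius-stable colorings of total size `n`. -/
theorem card_colorings [Fintype F] (n : ℕ) :
    Nat.card {s : ElemType F // weight s = n} =
      Nat.card {Λ : (AlgebraicClosure F)ˣ → Σ m : ℕ, m.Partition //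
        {x : (AlgebraicClosure F)ˣ | (Λ x).1 ≠ 0}.Finite ∧
        (∀ x : (AlgebraicClosure F)ˣ, Λ (x ^ Fintype.card F) = Λ x) ∧
        ∑ᶠ x : (AlgebraicClosure F)ˣ, (Λ x).1 = n} := by
  refine Nat.card_congr (Equiv.ofBijective (fun s => ⟨coloring s.1, (coloring_sum s.1).1,
    coloring_pow s.1, (coloring_sum s.1).2.trans s.2⟩) ⟨?_, ?_⟩)
  · intro s t h
    exact Subtype.ext (coloring_injective (congrArg Subtype.val h))
  · rintro ⟨Λ, hfin, hinv, hsum⟩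
    obtain ⟨s, rfl⟩ := coloring_surj Λ hfin hinv
    exact ⟨⟨s, (coloring_sum s).2.symm.trans hsum⟩, rfl⟩

end Classes

end GLClasses

/-- **Conjugacy classes of `GL_n(F_q)` as Frobenius-stable partition-valued colorings of
`K^×`** (Jordan decomposition): the number of conjugacy classes of `GL_n(F_q)` equals the
number of functions `Λ` from `K^×` (`K` an algebraic closure of `F_q`) to the set of
partitions of nonnegative integers (encoded as the sigma type `Σ m, Partition m`) that are
nonempty for only finitely many `x`, satisfy `Λ(x^q) = Λ(x)`, and have total size `n`. -/
theorem conjClasses_GL_eq_card_colorings (F : Type*) [Field F] [Fintype F]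
    (q : ℕ) (hq : Fintype.card F = q) (n : ℕ) (hn : 1 ≤ n) :
    Nat.card (ConjClasses (Matrix.GeneralLinearGroup (Fin n) F)) =
      Nat.card {Λ : (AlgebraicClosure F)ˣ → Σ m : ℕ, m.Partition //
        {x : (AlgebraicClosure F)ˣ | (Λ x).1 ≠ 0}.Finite ∧
        (∀ x : (AlgebraicClosure F)ˣ, Λ (x ^ q) = Λ x) ∧
        ∑ᶠ x : (AlgebraicClosure F)ˣ, (Λ x).1 = n} := by
  subst hq
  rw [← GLClasses.card_conjClasses, GLClasses.card_colorings]
end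

section
/- Let F_q be a finite field with q elements, let K be an algebraic closure of F_q, and let n ≥ 1. The number of similarity classes of n×n matrices over F_q (orbits of GL_n(F_q) acting by conjugation on M_n(F_q)) equals the number of functions Λ from K to the set of partitions of nonnegative integers such that Λ(x) is the empty partition for all but finitely many x, Λ(x^q) = Λ(x) for every x ∈ K, and ∑_{x ∈ K} |Λ(x)| = n. -/
/-!
A matrix `A` over `F` turns `F ^ n` into an `F[X]`-module on which `X` acts as `A`, and two
matrices are similar exactly when these modules are isomorphic (`exists_conj_iff`). By the
structure theorem over the PID `F[X]`, each such module is a direct sum of modules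
`F[X] / (p ^ e)` with `p` monic irreducible and `e > 0`; it is described by the multiset of the
pairs `(p, e)`, of total size `∑ deg p * e = n`.

The multiset is an invariant of the module (`HasType.unique`): multiplication by `p ^ k` maps
`F[X] / (r ^ e)` onto a copy of `F[X] / (p ^ (e - k))` if `r = p` (truncated subtraction), and is
bijective if `r ≠ p`. Hence the sizes of the modules `p ^ k M` determine, for every `k`, the number
of pairs `(p, e)` with `e > k`, and so the multiplicity of each pair. Every multiset of total size
`n` occurs, so similarity classes correspond to such multisets (`card_similarity_classes`).

On the other side, `x ↦ minpoly F x` identifies the Frobenius orbits in the algebraic closure with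
the monic irreducible polynomials, the fibre over `p` having `deg p` elements because `p` is
separable. A Frobenius-stable coloring is thus a partition-valued function of `p`. Sending a
multiset of pairs to the coloring whose value at `x` consists of the exponents `e` of the pairs
`(minpoly F x, e)` is a bijection matching the two notions of size (`card_colorings`).
-/

open Polynomial Module

namespace SimilarityClasses

universe u

variable {F : Type u} [Field F]

/-! ### Sums of cyclic modules -/

/-- The `F[X]`-module `∏ i, F[X] / (p i ^ e i)`, where `f i = (p i, e i)`. -/
abbrev CyclicSum (F : Type u) [Field F] {ι : Type*} (f : ι → F[X] × ℕ) : Type _ :=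
  ∀ i, F[X] ⧸ Ideal.span {(f i).1 ^ (f i).2}

lemma exists_equiv_of_map_univ_eq {ι κ α : Type*} [Fintype ι] [Fintype κ]
    {f : ι → α} {g : κ → α}
    (h : Finset.univ.val.map f = Finset.univ.val.map g) : ∃ σ : ι ≃ κ, ∀ i, g (σ i) = f i := by
  classical
  have key : ∀ c : α, Nonempty ({i // f i = c} ≃ {j // g j = c}) := by
    intro c
    rw [← Fintype.card_eq, Fintype.card_subtype, Fintype.card_subtype]
    have := congrArg (Multiset.count c) h
    rw [Multiset.count_map, Multiset.count_map] at this
    simp only [Finset.card_def, Finset.filter_val]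
    simpa only [eq_comm] using this
  let e := fun c => (key c).some
  exact ⟨Equiv.ofFiberEquiv e, fun i => Equiv.ofFiberEquiv_map e i⟩

lemma cyclicSum_equiv_of_map_univ_eq {ι κ : Type*} [Fintype ι] [Fintype κ]
    {f : ι → F[X] × ℕ} {g : κ → F[X] × ℕ}
    (h : Finset.univ.val.map f = Finset.univ.val.map g) :
    Nonempty (CyclicSum F f ≃ₗ[F[X]] CyclicSum F g) := by
  obtain ⟨σ, hσ⟩ := exists_equiv_of_map_univ_eq h
  obtain rfl : f = g ∘ σ := funext fun i => (hσ i).symm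
  exact ⟨LinearEquiv.piCongrLeft F[X] (fun j => F[X] ⧸ Ideal.span {(g j).1 ^ (g j).2}) σ⟩

/-- `M` is isomorphic to the direct sum of the modules `F[X] / (p ^ e)` over the pairs `(p, e)` of
the multiset `s`. The multiset is enumerated by some `Fin k`; the choice of enumeration does not
matter, by `cyclicSum_equiv_of_map_univ_eq`. -/
def HasType (M : Type*) [AddCommGroup M] [Module F[X] M] (s : Multiset (F[X] × ℕ)) : Prop :=
  ∃ (k : ℕ) (f : Fin k → F[X] × ℕ), Finset.univ.val.map f = s ∧
    Nonempty (M ≃ₗ[F[X]] CyclicSum F f)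

lemma HasType.of_equiv {M N : Type*} [AddCommGroup M] [Module F[X] M] [AddCommGroup N]
    [Module F[X] N] {s : Multiset (F[X] × ℕ)} (h : HasType N s) (e : M ≃ₗ[F[X]] N) :
    HasType M s := by
  obtain ⟨k, f, hf, ⟨e'⟩⟩ := h
  exact ⟨k, f, hf, ⟨e.trans e'⟩⟩

lemma HasType.nonempty_equiv {M N : Type*} [AddCommGroup M] [Module F[X] M] [AddCommGroup N]
    [Module F[X] N] {s : Multiset (F[X] × ℕ)} (hM : HasType M s) (hN : HasType N s) :
    Nonempty (M ≃ₗ[F[X]] N) := by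
  obtain ⟨k, f, hf, ⟨e⟩⟩ := hM
  obtain ⟨l, g, hg, ⟨e'⟩⟩ := hN
  obtain ⟨a⟩ := cyclicSum_equiv_of_map_univ_eq (hf.trans hg.symm)
  exact ⟨(e.trans a).trans e'.symm⟩

lemma hasType_cyclicSum {ι : Type*} [Fintype ι] (f : ι → F[X] × ℕ) :
    HasType (CyclicSum F f) (Finset.univ.val.map f) := by
  have h : Finset.univ.val.map (f ∘ (Fintype.equivFin ι).symm) = Finset.univ.val.map f := by
    rw [← Multiset.map_map]
    congr 1
    exact Multiset.map_univ_val_equiv _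
  exact ⟨_, _, h, cyclicSum_equiv_of_map_univ_eq h.symm⟩

lemma exists_fin_family (s : Multiset (F[X] × ℕ)) :
    ∃ (k : ℕ) (f : Fin k → F[X] × ℕ), Finset.univ.val.map f = s := by
  induction s using Quotient.inductionOn with
  | h l =>
    refine ⟨l.length, l.get, ?_⟩
    simp [Fin.univ_def]

/-- Every pair of `s` consists of a monic irreducible polynomial and a positive exponent: such
multisets are the normal forms for the structure theorem. -/
def IsAdmissible (s : Multiset (F[X] × ℕ)) : Prop :=
  ∀ a ∈ s, a.1.Monic ∧ Irreducible a.1 ∧ 0 < a.2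

/-- Summands with exponent `0` are trivial and can be dropped. -/
lemma cyclicSum_equiv_subtype {ι : Type*} (f : ι → F[X] × ℕ) :
    Nonempty (CyclicSum F f ≃ₗ[F[X]]
      CyclicSum F (fun i : {i // (f i).2 ≠ 0} => f i.1)) := by
  classical
  let r : CyclicSum F f →ₗ[F[X]] CyclicSum F (fun i : {i // (f i).2 ≠ 0} => f i.1) :=
    LinearMap.pi fun i => LinearMap.proj i.1
  refine ⟨LinearEquiv.ofBijective r ⟨fun x y h => ?_, fun y => ?_⟩⟩
  · funext i
    by_cases hi : (f i).2 = 0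
    · have : Subsingleton (F[X] ⧸ Ideal.span {(f i).1 ^ (f i).2}) := by
        rw [hi, pow_zero, Ideal.span_singleton_one]
        exact Ideal.Quotient.subsingleton_iff.2 rfl
      exact Subsingleton.elim _ _
    · exact congrFun h ⟨i, hi⟩
  · refine ⟨fun i => if hi : (f i).2 ≠ 0 then y ⟨i, hi⟩ else 0, ?_⟩
    funext i
    simp only [r, LinearMap.pi_apply, LinearMap.proj_apply]
    rw [dif_pos i.2]

/-- The structure theorem, with the primes made monic and the trivial summands removed. -/
theorem exists_admissible_hasType (M : Type*) [AddCommGroup M] [Module F[X] M]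
    [Module.Finite F[X] M] (hM : Module.IsTorsion F[X] M) :
    ∃ s : Multiset (F[X] × ℕ), IsAdmissible s ∧ HasType M s := by
  classical
  obtain ⟨ι, _, p, hp, e, ⟨φ⟩⟩ := Module.equiv_directSum_of_isTorsion hM
  let f : ι → F[X] × ℕ := fun i => (normalize (p i), e i)
  have hspan : ∀ i, Submodule.span F[X] {p i ^ e i} = Ideal.span {(f i).1 ^ (f i).2} := by
    intro i
    exact Ideal.span_singleton_eq_span_singleton.2 ((associated_normalize (p i)).pow_pow)
  have e1 : (DirectSum ι fun i => F[X] ⧸ Submodule.span F[X] {p i ^ e i}) ≃ₗ[F[X]]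
      CyclicSum F f :=
    (DirectSum.linearEquivFunOnFintype F[X] ι _).trans
      (LinearEquiv.piCongrRight fun i => Submodule.quotEquivOfEq _ _ (hspan i))
  obtain ⟨e2⟩ := cyclicSum_equiv_subtype f
  refine ⟨_, ?_, (hasType_cyclicSum (fun i : {i // (f i).2 ≠ 0} => f i.1)).of_equiv
    ((φ.trans e1).trans e2)⟩
  intro a ha
  obtain ⟨i, -, rfl⟩ := Multiset.mem_map.1 ha
  exact ⟨Polynomial.monic_normalize (hp i.1).ne_zero,
    (associated_normalize (p i.1)).irreducible (hp i.1), Nat.pos_of_ne_zero i.2⟩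

/-! ### Uniqueness of the type -/

lemma card_quotient_span (c : F[X]) (hc : c ≠ 0) :
    Nat.card (F[X] ⧸ Ideal.span {c}) = Nat.card F ^ c.natDegree := by
  have : Module.Finite F (F[X] ⧸ Ideal.span {c}) := (AdjoinRoot.powerBasis hc).finite
  rw [Module.natCard_eq_pow_finrank (K := F), finrank_quotient_span_eq_natDegree]

/-- If `c` generates the ideal quotient `(a : b)`, then `b • (F[X] / (a))` is isomorphic to
`F[X] / (c)`. -/
lemma card_range_smul_quotient (a b c : F[X]) (hc : c ≠ 0) (h : ∀ g : F[X], a ∣ g * b ↔ c ∣ g) :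
    Nat.card (Set.range fun m : F[X] ⧸ Ideal.span {a} => b • m) = Nat.card F ^ c.natDegree := by
  rw [← card_quotient_span c hc]
  let φ : F[X] →ₗ[F[X]] F[X] ⧸ Ideal.span {a} :=
    LinearMap.toSpanSingleton F[X] _ (Submodule.Quotient.mk b)
  have hφ : ∀ g, φ g = Submodule.Quotient.mk (g * b) := fun g => rfl
  have hker : LinearMap.ker φ = Ideal.span {c} := by
    ext g
    rw [LinearMap.mem_ker, hφ, Submodule.Quotient.mk_eq_zero, Ideal.mem_span_singleton,
      Ideal.mem_span_singleton, h]
  have hrange : (Set.range fun m : F[X] ⧸ Ideal.span {a} => b • m) =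
      (LinearMap.range φ : Set _) := by
    ext m
    constructor
    · rintro ⟨m, rfl⟩
      obtain ⟨g, rfl⟩ := Submodule.Quotient.mk_surjective _ m
      exact ⟨g, by rw [hφ, mul_comm]; rfl⟩
    · rintro ⟨g, rfl⟩
      exact ⟨Submodule.Quotient.mk g, by rw [hφ, mul_comm]; rfl⟩
  rw [hrange]
  refine Nat.card_congr (φ.quotKerEquivRange.toEquiv.symm.trans
    (Submodule.quotEquivOfEq _ _ hker).toEquiv)

/-- The dimension over `F` of `p ^ k • (F[X] / (r ^ e))`, where `a = (r, e)`, for monic irreducible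
`p` and `r`. The truncated subtraction gives the right value `0` when `e ≤ k`. -/
noncomputable def residual [DecidableEq F] (p : F[X]) (k : ℕ) (a : F[X] × ℕ) : ℕ :=
  a.1.natDegree * (if a.1 = p then a.2 - k else a.2)

lemma card_range_smul_cyclic [DecidableEq F] (p : F[X]) (hpm : p.Monic) (hp : Irreducible p)
    (k : ℕ) (a : F[X] × ℕ) (ham : a.1.Monic) (ha : Irreducible a.1) :
    Nat.card (Set.range fun m : F[X] ⧸ Ideal.span {a.1 ^ a.2} => p ^ k • m) =
      Nat.card F ^ residual p k a := by
  rw [card_range_smul_quotient (a.1 ^ a.2) (p ^ k)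
    (a.1 ^ (if a.1 = p then a.2 - k else a.2)) (pow_ne_zero _ ha.ne_zero), natDegree_pow,
    residual, mul_comm]
  intro g
  split_ifs with h
  · subst h
    rcases le_total a.2 k with hk | hk
    · rw [Nat.sub_eq_zero_of_le hk, pow_zero]
      exact iff_of_true (Dvd.dvd.mul_left (pow_dvd_pow _ hk) _) (one_dvd _)
    · conv_lhs => rw [← Nat.sub_add_cancel hk, pow_add]
      exact mul_dvd_mul_iff_right (pow_ne_zero _ ha.ne_zero)
  · have hcop : IsCoprime (a.1 ^ a.2) (p ^ k) := by
      refine IsCoprime.pow ((ha.coprime_iff_not_dvd).2 fun hd => h ?_)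
      exact eq_of_monic_of_associated ham hpm (ha.associated_of_dvd hp hd)
    exact ⟨fun hd => hcop.dvd_of_dvd_mul_right hd, fun hd => hd.mul_right _⟩

lemma card_range_smul_cyclicSum [DecidableEq F] {ι : Type*} [Fintype ι] (f : ι → F[X] × ℕ)
    (hf : ∀ i, (f i).1.Monic ∧ Irreducible (f i).1)
    (p : F[X]) (hpm : p.Monic) (hp : Irreducible p) (k : ℕ) :
    Nat.card (Set.range fun m : CyclicSum F f => p ^ k • m) =
      Nat.card F ^ ∑ i, residual p k (f i) := by
  have : (Set.range fun m : CyclicSum F f => p ^ k • m) =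
      Set.pi Set.univ fun i =>
        Set.range fun m : F[X] ⧸ Ideal.span {(f i).1 ^ (f i).2} => p ^ k • m := by
    ext y
    simp only [Set.mem_range, Set.mem_pi, Set.mem_univ, true_imp_iff]
    constructor
    · rintro ⟨m, rfl⟩ i
      exact ⟨m i, rfl⟩
    · intro h
      choose m hm using h
      exact ⟨m, funext hm⟩
  rw [this, Nat.card_congr (Equiv.Set.univPi _), Nat.card_pi, ← Finset.prod_pow_eq_pow_sum]
  exact Finset.prod_congr rfl fun i _ =>
    card_range_smul_cyclic p hpm hp k (f i) (hf i).1 (hf i).2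

lemma HasType.card_range_smul [DecidableEq F] {M : Type*} [AddCommGroup M] [Module F[X] M]
    {s : Multiset (F[X] × ℕ)}
    (hs : IsAdmissible s) (h : HasType M s)
    (p : F[X]) (hpm : p.Monic) (hp : Irreducible p) (k : ℕ) :
    Nat.card (Set.range fun m : M => p ^ k • m) = Nat.card F ^ (s.map (residual p k)).sum := by
  obtain ⟨l, f, rfl, ⟨e⟩⟩ := h
  have hf : ∀ i, (f i).1.Monic ∧ Irreducible (f i).1 := fun i =>
    have := hs (f i) (Multiset.mem_map_of_mem f (Finset.mem_univ_val i))
    ⟨this.1, this.2.1⟩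
  rw [Multiset.map_map]
  refine Eq.trans ?_ (card_range_smul_cyclicSum f hf p hpm hp k)
  have : (Set.range fun m : CyclicSum F f => p ^ k • m) =
      e '' (Set.range fun m : M => p ^ k • m) := by
    rw [← Set.range_comp, ← e.surjective.range_comp]
    congr 1
    funext m
    simp
  rw [this, Nat.card_image_of_injective e.injective]

/-- Passing from `p ^ k • M` to `p ^ (k + 1) • M` loses `deg p` dimensions for each summand
`F[X] / (p ^ e)` with `e > k`. -/
lemma sum_residual_succ [DecidableEq F] (p : F[X]) (k : ℕ) (s : Multiset (F[X] × ℕ)) :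
    (s.map (residual p k)).sum = (s.map (residual p (k + 1))).sum +
      p.natDegree * s.countP (fun a => a.1 = p ∧ k < a.2) := by
  induction s using Multiset.induction_on with
  | empty => simp
  | cons a s ih =>
    rw [Multiset.map_cons, Multiset.sum_cons, Multiset.map_cons, Multiset.sum_cons, ih,
      Multiset.countP_cons]
    have : residual p k a = residual p (k + 1) a +
        p.natDegree * (if a.1 = p ∧ k < a.2 then 1 else 0) := by
      unfold residual
      by_cases h : a.1 = p
      · subst h
        by_cases hk : k < a.2
        · simp only [hk, and_self, if_true, ← mul_add]
          congr 1
          omega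
        · simp only [hk, and_false, if_true, if_false, mul_zero, add_zero]
          congr 1
          omega
      · simp [h]
    rw [this]
    ring

lemma countP_succ [DecidableEq F] (p : F[X]) (k : ℕ) (s : Multiset (F[X] × ℕ)) :
    s.countP (fun a => a.1 = p ∧ k < a.2) =
      s.countP (fun a => a.1 = p ∧ k + 1 < a.2) + s.count (p, k + 1) := by
  induction s using Multiset.induction_on with
  | empty => simp
  | cons a s ih =>
    rw [Multiset.countP_cons, Multiset.countP_cons, Multiset.count_cons, ih]
    obtain ⟨r, e⟩ := a
    simp only [Prod.mk.injEq]
    split_ifs <;> first | omega | (exfalso; grind)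

theorem HasType.unique [Finite F] {M : Type*} [AddCommGroup M] [Module F[X] M]
    {s t : Multiset (F[X] × ℕ)} (hs : IsAdmissible s) (ht : IsAdmissible t)
    (hMs : HasType M s) (hMt : HasType M t) : s = t := by
  classical
  have hq : 1 < Nat.card F := Finite.one_lt_card
  have hres : ∀ p : F[X], p.Monic → Irreducible p → ∀ k,
      (s.map (residual p k)).sum = (t.map (residual p k)).sum := fun p hpm hp k =>
    Nat.pow_right_injective hq
      ((hMs.card_range_smul hs p hpm hp k).symm.trans (hMt.card_range_smul ht p hpm hp k))
  have hcount : ∀ p : F[X], p.Monic → Irreducible p → ∀ k,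
      s.countP (fun a => a.1 = p ∧ k < a.2) = t.countP (fun a => a.1 = p ∧ k < a.2) := by
    intro p hpm hp k
    have h1 := sum_residual_succ p k s
    rw [hres p hpm hp k, hres p hpm hp (k + 1), sum_residual_succ p k t] at h1
    exact (Nat.eq_of_mul_eq_mul_left hp.natDegree_pos (Nat.add_left_cancel h1)).symm
  ext ⟨p, e⟩
  by_cases hgood : p.Monic ∧ Irreducible p ∧ 0 < e
  · obtain ⟨hpm, hp, he⟩ := hgood
    obtain ⟨k, rfl⟩ := Nat.exists_eq_succ_of_ne_zero he.ne'
    have h1 := countP_succ p k s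
    rw [hcount p hpm hp k, hcount p hpm hp (k + 1), countP_succ p k t] at h1
    exact (Nat.add_left_cancel h1).symm
  · rw [Multiset.count_eq_zero.2 fun h => hgood (hs _ h),
      Multiset.count_eq_zero.2 fun h => hgood (ht _ h)]

lemma HasType.card_eq {M : Type*} [AddCommGroup M] [Module F[X] M] {s : Multiset (F[X] × ℕ)}
    (hs : IsAdmissible s) (h : HasType M s) :
    Nat.card M = Nat.card F ^ (s.map fun a => a.1.natDegree * a.2).sum := by
  classical
  -- With `k = 0` every irreducible polynomial gives the size of `M` itself; `X` is one.
  have h1 := h.card_range_smul hs X monic_X irreducible_X 0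
  have : (Set.range fun m : M => (X : F[X]) ^ 0 • m) = Set.univ := by simp
  rw [this, Nat.card_univ] at h1
  rw [h1]
  congr 3
  funext a
  simp [residual]


/-! ### Matrices -/

/-- `F ^ n` as an `F[X]`-module with `X` acting as `A`. -/
abbrev MatrixModule {n : ℕ} (A : Matrix (Fin n) (Fin n) F) : Type u :=
  AEval' (Matrix.toLin' A)

lemma exists_conj_iff {n : ℕ} (A B : Matrix (Fin n) (Fin n) F) :
    (∃ g : Matrix.GeneralLinearGroup (Fin n) F,
      (g : Matrix (Fin n) (Fin n) F) * A * ((g⁻¹ : Matrix.GeneralLinearGroup (Fin n) F) :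
        Matrix (Fin n) (Fin n) F) = B) ↔
      Nonempty (MatrixModule A ≃ₗ[F[X]] MatrixModule B) := by
  constructor
  · rintro ⟨g, rfl⟩
    let f : (Fin n → F) ≃ₗ[F] (Fin n → F) :=
      LinearEquiv.ofLinearMap (Matrix.toLin' (g : Matrix (Fin n) (Fin n) F))
        (Matrix.toLin' ((g⁻¹ : Matrix.GeneralLinearGroup (Fin n) F) : Matrix (Fin n) (Fin n) F))
        (by rw [← Matrix.toLin'_mul, Units.mul_inv, Matrix.toLin'_one])
        (by rw [← Matrix.toLin'_mul, Units.inv_mul, Matrix.toLin'_one])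
    refine ⟨LinearEquiv.ofAEval _ (f.trans (AEval'.of _)) fun m => ?_⟩
    rw [LinearEquiv.trans_apply, LinearEquiv.trans_apply, AEval'.X_smul_of]
    congr 1
    change Matrix.toLin' _ (Matrix.toLin' A m) = Matrix.toLin' _ (Matrix.toLin' _ m)
    rw [← Matrix.toLin'_mul_apply, ← Matrix.toLin'_mul_apply, Units.inv_mul_cancel_right]
  · rintro ⟨e⟩
    let f : (Fin n → F) ≃ₗ[F] (Fin n → F) :=
      ((AEval'.of (Matrix.toLin' A)).trans (e.restrictScalars F)).trans
        (AEval'.of (Matrix.toLin' B)).symm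
    have hf : ∀ m, f (Matrix.toLin' A m) = Matrix.toLin' B (f m) := by
      intro m
      change (AEval'.of (Matrix.toLin' B)).symm (e (AEval'.of (Matrix.toLin' A) (Matrix.toLin' A m))) = _
      rw [← AEval'.X_smul_of, map_smul, AEval'.of_symm_X_smul]
      rfl
    let g : Matrix.GeneralLinearGroup (Fin n) F :=
      { val := LinearMap.toMatrix' f.toLinearMap
        inv := LinearMap.toMatrix' f.symm.toLinearMap
        val_inv := by rw [← LinearMap.toMatrix'_comp]; simp
        inv_val := by rw [← LinearMap.toMatrix'_comp]; simp }
    refine ⟨g, ?_⟩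
    rw [Units.mul_inv_eq_iff_eq_mul]
    apply Matrix.toLin'.injective
    refine LinearMap.ext fun m => ?_
    rw [Matrix.toLin'_mul_apply, Matrix.toLin'_mul_apply]
    have hg : Matrix.toLin' (g : Matrix (Fin n) (Fin n) F) = f.toLinearMap :=
      Matrix.toLin'_toMatrix' _
    rw [hg]
    exact hf m

/-- Admissible multisets whose module has dimension `n` over `F`. -/
def AdmissibleOfSize (F : Type u) [Field F] (n : ℕ) : Type u :=
  {s : Multiset (F[X] × ℕ) //
    IsAdmissible s ∧ (s.map fun a => a.1.natDegree * a.2).sum = n}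

lemma exists_type_of_matrix [Finite F] {n : ℕ} (A : Matrix (Fin n) (Fin n) F) :
    ∃ s : AdmissibleOfSize F n, HasType (MatrixModule A) s.1 := by
  obtain ⟨s, hs, h⟩ := exists_admissible_hasType (MatrixModule A)
    (AEval.isTorsion_of_finiteDimensional F (Fin n → F) (Matrix.toLin' A))
  refine ⟨⟨s, hs, ?_⟩, h⟩
  have h1 := h.card_eq hs
  have h2 : Nat.card (MatrixModule A) = Nat.card F ^ n := by
    have h3 : Nat.card (Fin n → F) = Nat.card F ^ n := by rw [Nat.card_fun, Nat.card_fin]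
    exact h3
  exact (Nat.pow_right_injective Finite.one_lt_card (h2.symm.trans h1)).symm

lemma exists_matrix_of_type [Finite F] {n : ℕ} (s : AdmissibleOfSize F n) :
    ∃ A : Matrix (Fin n) (Fin n) F, HasType (MatrixModule A) s.1 := by
  obtain ⟨s, hs, hn⟩ := s
  obtain ⟨k, f, rfl⟩ := exists_fin_family s
  have hT := hasType_cyclicSum f
  have hcard := hT.card_eq hs
  rw [hn] at hcard
  have : Finite (CyclicSum F f) := Nat.finite_of_card_ne_zero (by
    rw [hcard]; exact pow_ne_zero _ Nat.card_pos.ne')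
  have : Module.Finite F (CyclicSum F f) := Module.Finite.of_finite
  have hfin : finrank F (Fin n → F) = finrank F (CyclicSum F f) := by
    rw [finrank_fin_fun]
    rw [Module.natCard_eq_pow_finrank (K := F)] at hcard
    exact (Nat.pow_right_injective Finite.one_lt_card hcard).symm
  let e : (Fin n → F) ≃ₗ[F] CyclicSum F f := LinearEquiv.ofFinrankEq _ _ hfin
  let mulX : CyclicSum F f →ₗ[F] CyclicSum F f := (LinearMap.lsmul F[X] _ X).restrictScalars F
  refine ⟨LinearMap.toMatrix' (e.symm.toLinearMap ∘ₗ mulX ∘ₗ e.toLinearMap),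
    hT.of_equiv (LinearEquiv.ofAEval _ e fun m => ?_)⟩
  rw [Matrix.toLin'_toMatrix']
  change e (e.symm ((X : F[X]) • e m)) = _
  rw [LinearEquiv.apply_symm_apply]

lemma card_range_eq_of_surjective {α β γ : Type*} (f : α → β) (τ : α → γ)
    (hτ : Function.Surjective τ) (h : ∀ a b, f a = f b ↔ τ a = τ b) :
    Nat.card (Set.range f) = Nat.card γ := by
  refine (Nat.card_eq_of_bijective (fun c => (⟨f (Function.surjInv hτ c), _, rfl⟩ : Set.range f))
    ⟨fun c d hcd => ?_, ?_⟩).symm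
  · have := (h _ _).1 (congrArg Subtype.val hcd)
    rwa [Function.surjInv_eq hτ, Function.surjInv_eq hτ] at this
  · rintro ⟨_, a, rfl⟩
    exact ⟨τ a, Subtype.ext ((h _ _).2 (Function.surjInv_eq hτ _))⟩

theorem card_similarity_classes [Finite F] (n : ℕ) :
    Nat.card ↥(Set.range fun A : Matrix (Fin n) (Fin n) F =>
        {B : Matrix (Fin n) (Fin n) F | ∃ g : Matrix.GeneralLinearGroup (Fin n) F,
          (g : Matrix (Fin n) (Fin n) F) * A * ((g⁻¹ : Matrix.GeneralLinearGroup (Fin n) F) :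
            Matrix (Fin n) (Fin n) F) = B}) = Nat.card (AdmissibleOfSize F n) := by
  choose τ hτ using exists_type_of_matrix (F := F) (n := n)
  have heq : ∀ A B, τ A = τ B ↔ Nonempty (MatrixModule A ≃ₗ[F[X]] MatrixModule B) := by
    intro A B
    constructor
    · intro h
      exact (hτ A).nonempty_equiv (h ▸ hτ B)
    · rintro ⟨e⟩
      exact Subtype.ext ((hτ A).unique (τ A).2.1 (τ B).2.1 ((hτ B).of_equiv e))
  refine card_range_eq_of_surjective _ τ (fun s => ?_) fun A B => ?_
  · obtain ⟨A, hA⟩ := exists_matrix_of_type s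
    exact ⟨A, Subtype.ext ((hτ A).unique (τ A).2.1 s.2.1 hA)⟩
  · simp only [exists_conj_iff]
    rw [heq]
    constructor
    · intro h
      have : B ∈ {B | Nonempty (MatrixModule A ≃ₗ[F[X]] MatrixModule B)} := by
        rw [h]
        exact ⟨LinearEquiv.refl _ _⟩
      exact this
    · rintro ⟨e⟩
      ext C
      exact ⟨fun ⟨d⟩ => ⟨e.symm.trans d⟩, fun ⟨d⟩ => ⟨e.trans d⟩⟩

/-! ### Frobenius orbits -/

lemma minpoly_pow_card [Fintype F] (x : AlgebraicClosure F) :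
    minpoly F (x ^ Fintype.card F) = minpoly F x :=
  minpoly.algHom_eq (FiniteField.frobeniusAlgHom F (AlgebraicClosure F))
    (FiniteField.frobeniusAlgHom F (AlgebraicClosure F)).injective x

/-- Conjugate elements differ by an automorphism, whose restriction to the finite field `F(x)` is a
power of the Frobenius. -/
lemma exists_eq_pow_of_minpoly_eq [Fintype F] {x y : AlgebraicClosure F}
    (h : minpoly F x = minpoly F y) : ∃ i : ℕ, y = x ^ Fintype.card F ^ i := by
  obtain ⟨σ, hσ⟩ := (isConjRoot_iff_exists_algEquiv (K := F) (x := y) (y := x)).1 h.symm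
  have hx : IsIntegral F x := Algebra.IsIntegral.isIntegral x
  have : FiniteDimensional F (IntermediateField.adjoin F {x}) :=
    IntermediateField.adjoin.finiteDimensional hx
  have : Finite (IntermediateField.adjoin F {x}) := Module.finite_of_finite F
  obtain ⟨i, hi⟩ := (FiniteField.bijective_frobeniusAlgEquivOfAlgebraic_pow F
    (IntermediateField.adjoin F {x})).2 (σ.restrictNormal (IntermediateField.adjoin F {x}))
  refine ⟨i, ?_⟩
  have h1 := σ.restrictNormal_commutes (IntermediateField.adjoin F {x})
    (IntermediateField.AdjoinSimple.gen F x)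
  rw [← hi] at h1
  simp only [AlgEquiv.coe_pow, FiniteField.coe_frobeniusAlgEquivOfAlgebraic_iterate, map_pow] at h1
  rw [← hσ]
  exact h1.symm

lemma ncard_minpoly_eq [Finite F] (p : F[X]) (hpm : p.Monic) (hp : Irreducible p) :
    {x : AlgebraicClosure F | minpoly F x = p}.Finite ∧
    {x : AlgebraicClosure F | minpoly F x = p}.ncard = p.natDegree := by
  have : {x : AlgebraicClosure F | minpoly F x = p} = p.rootSet (AlgebraicClosure F) := by
    ext x
    rw [mem_rootSet_of_ne hp.ne_zero]
    constructor
    · rintro rfl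
      exact minpoly.aeval F x
    · intro h
      exact (minpoly.eq_of_irreducible_of_monic hp h hpm).symm
  rw [this]
  refine ⟨rootSet_finite _ _, ?_⟩
  rw [← card_rootSet_eq_natDegree (K := AlgebraicClosure F)
    (PerfectField.separable_of_irreducible hp) (IsAlgClosed.splits _), ← Nat.card_coe_set_eq, Nat.card_eq_fintype_card]

/-! ### Colorings -/

lemma sigma_partition_ext {a b : Σ m : ℕ, m.Partition} (h : a.2.parts = b.2.parts) : a = b := by
  obtain ⟨m, a⟩ := a
  obtain ⟨l, b⟩ := b
  obtain rfl : m = l := by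
    rw [← a.parts_sum, ← b.parts_sum]
    exact congrArg Multiset.sum h
  exact congrArg _ (Nat.Partition.ext h)

open Classical in
/-- The exponents that occur with the polynomial `p` in `s`. -/
noncomputable def exponents (s : Multiset (F[X] × ℕ)) (p : F[X]) : Multiset ℕ :=
  (s.filter fun a => a.1 = p).map Prod.snd

open Classical in
lemma count_exponents (s : Multiset (F[X] × ℕ)) (p : F[X]) (e : ℕ) :
    (exponents s p).count e = s.count (p, e) := by
  rw [exponents, Multiset.count_map, Multiset.filter_filter, Multiset.count,
    Multiset.countP_eq_card_filter]
  congr 2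
  funext a
  rw [Prod.ext_iff, and_comm, eq_comm (a := a.1)]

/-- The coloring attached to `s`: the parts of its value at `x` are the exponents that occur with the
minimal polynomial of `x`. `Nat.Partition.ofMultiset` discards zeros, of which there are none when
`s` is admissible. -/
noncomputable def coloring (s : Multiset (F[X] × ℕ)) (x : AlgebraicClosure F) :
    Σ m : ℕ, m.Partition :=
  ⟨(exponents s (minpoly F x)).sum, Nat.Partition.ofMultiset (exponents s (minpoly F x))⟩

lemma coloring_parts {s : Multiset (F[X] × ℕ)} (hs : IsAdmissible s) (x : AlgebraicClosure F) :
    (coloring s x).2.parts = exponents s (minpoly F x) := by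
  classical
  refine Multiset.filter_eq_self.2 fun e he => ?_
  obtain ⟨a, ha, rfl⟩ := Multiset.mem_map.1 he
  exact (hs a (Multiset.mem_filter.1 ha).1).2.2.ne'

/-- A pair `(p, e)` contributes `e` at each of the `deg p` roots of `p`. -/
lemma finsum_coloring [Finite F] {s : Multiset (F[X] × ℕ)} (hs : IsAdmissible s) :
    {x : AlgebraicClosure F | (coloring s x).1 ≠ 0}.Finite ∧
    ∑ᶠ x : AlgebraicClosure F, (coloring s x).1 = (s.map fun a => a.1.natDegree * a.2).sum := by
  classical
  induction s using Multiset.induction_on with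
  | empty => simp [coloring, exponents]
  | cons a s ih =>
    obtain ⟨ihf, ihs⟩ := ih fun b hb => hs b (Multiset.mem_cons_of_mem hb)
    obtain ⟨hm, hi, -⟩ := hs a (Multiset.mem_cons_self a s)
    obtain ⟨hfin, hcard⟩ := ncard_minpoly_eq a.1 hm hi
    have hcons : ∀ x : AlgebraicClosure F, (coloring (a ::ₘ s) x).1 =
        (if minpoly F x = a.1 then a.2 else 0) + (coloring s x).1 := by
      intro x
      simp only [coloring, exponents]
      by_cases h : a.1 = minpoly F x
      · rw [Multiset.filter_cons_of_pos (p := fun b : F[X] × ℕ => b.1 = minpoly F x) _ h, if_pos h.symm]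
        simp
      · rw [Multiset.filter_cons_of_neg (p := fun b : F[X] × ℕ => b.1 = minpoly F x) _ h, if_neg (Ne.symm h), zero_add]
    have hsub : (Function.support fun x : AlgebraicClosure F =>
        if minpoly F x = a.1 then a.2 else 0) ⊆ {x | minpoly F x = a.1} := by
      intro x hx
      by_contra h
      exact hx (if_neg h)
    simp only [hcons]
    constructor
    · refine (hfin.union ihf).subset fun x hx => ?_
      by_cases h : minpoly F x = a.1
      · exact Or.inl h
      · right
        simpa [h] using hx
    · rw [finsum_add_distrib (hfin.subset hsub) ihf, ihs, Multiset.map_cons, Multiset.sum_cons]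
      congr 1
      rw [finsum_eq_sum_of_support_subset (s := hfin.toFinset) _ (by simpa using hsub),
        Finset.sum_congr rfl (g := fun _ => a.2) fun x hx =>
          if_pos (show minpoly F x = a.1 from (hfin.mem_toFinset).1 hx),
        Finset.sum_const, ← Set.ncard_eq_toFinset_card _ hfin, hcard, smul_eq_mul]

lemma coloring_injective [Finite F] {s t : Multiset (F[X] × ℕ)} (hs : IsAdmissible s)
    (ht : IsAdmissible t) (h : coloring s = coloring t) : s = t := by
  classical
  ext ⟨p, e⟩
  by_cases hp : p.Monic ∧ Irreducible p
  · obtain ⟨x, rfl⟩ : ∃ x : AlgebraicClosure F, minpoly F x = p := by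
      refine Set.nonempty_of_ncard_ne_zero (s := {x | minpoly F x = p}) ?_
      rw [(ncard_minpoly_eq p hp.1 hp.2).2]
      exact hp.2.natDegree_pos.ne'
    rw [← count_exponents, ← count_exponents, ← coloring_parts hs, ← coloring_parts ht, h]
  · rw [Multiset.count_eq_zero.2 fun h => hp ⟨(hs _ h).1, (hs _ h).2.1⟩,
      Multiset.count_eq_zero.2 fun h => hp ⟨(ht _ h).1, (ht _ h).2.1⟩]

lemma exists_coloring_eq [Fintype F] (Λ : AlgebraicClosure F → Σ m : ℕ, m.Partition)
    (hfin : {x : AlgebraicClosure F | (Λ x).1 ≠ 0}.Finite)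
    (hfrob : ∀ x, Λ (x ^ Fintype.card F) = Λ x) :
    ∃ s : Multiset (F[X] × ℕ), IsAdmissible s ∧ coloring s = Λ := by
  classical
  have hpow : ∀ (i : ℕ) x, Λ (x ^ Fintype.card F ^ i) = Λ x := by
    intro i x
    induction i with
    | zero => simp
    | succ i ih => rw [pow_succ, pow_mul, hfrob, ih]
  let root : F[X] → AlgebraicClosure F := Function.invFun (minpoly F)
  have hroot : ∀ x : AlgebraicClosure F, minpoly F (root (minpoly F x)) = minpoly F x := fun x =>
    Function.invFun_eq ⟨x, rfl⟩
  have hΛroot : ∀ x, Λ (root (minpoly F x)) = Λ x := by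
    intro x
    obtain ⟨i, hi⟩ := exists_eq_pow_of_minpoly_eq (hroot x)
    conv_rhs => rw [hi]
    exact (hpow i _).symm
  let P : Finset F[X] := hfin.toFinset.image (minpoly F)
  let s : Multiset (F[X] × ℕ) := ∑ p ∈ P, (Λ (root p)).2.parts.map fun e => (p, e)
  have hs : IsAdmissible s := by
    intro a ha
    obtain ⟨p, hp, ha⟩ := Multiset.mem_sum.1 ha
    obtain ⟨e, he, rfl⟩ := Multiset.mem_map.1 ha
    obtain ⟨x, -, rfl⟩ := Finset.mem_image.1 hp
    have hx : IsIntegral F x := Algebra.IsIntegral.isIntegral x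
    exact ⟨minpoly.monic hx, minpoly.irreducible hx, (Λ _).2.parts_pos he⟩
  refine ⟨s, hs, funext fun x => sigma_partition_ext ?_⟩
  rw [coloring_parts hs]
  ext e
  rw [count_exponents, Multiset.count_sum']
  have hterm : ∀ p ∈ P, p ≠ minpoly F x →
      ((Λ (root p)).2.parts.map fun e => (p, e)).count (minpoly F x, e) = 0 := by
    intro p _ hne
    refine Multiset.count_eq_zero.2 fun h => hne ?_
    obtain ⟨e', -, h⟩ := Multiset.mem_map.1 h
    exact congrArg Prod.fst h
  rw [Finset.sum_eq_single (minpoly F x) hterm]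
  · rw [hΛroot, Multiset.count_map_eq_count' _ _ (Prod.mk_right_injective _)]
  · intro hx
    rw [hΛroot, Multiset.count_map_eq_count' _ _ (Prod.mk_right_injective _)]
    have h0 : (Λ x).1 = 0 := by
      by_contra h
      exact hx (Finset.mem_image_of_mem _ (hfin.mem_toFinset.2 h))
    refine Multiset.count_eq_zero.2 fun he => ?_
    have h1 := Multiset.le_sum_of_mem he
    rw [(Λ x).2.parts_sum, h0] at h1
    exact absurd ((Λ x).2.parts_pos he) (by omega)

theorem card_colorings [Fintype F] (n : ℕ) :
    Nat.card (AdmissibleOfSize F n) =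
      Nat.card {Λ : AlgebraicClosure F → Σ m : ℕ, m.Partition //
        {x : AlgebraicClosure F | (Λ x).1 ≠ 0}.Finite ∧
        (∀ x : AlgebraicClosure F, Λ (x ^ Fintype.card F) = Λ x) ∧
        ∑ᶠ x : AlgebraicClosure F, (Λ x).1 = n} := by
  refine Nat.card_eq_of_bijective (fun s => ⟨coloring s.1, (finsum_coloring s.2.1).1,
    fun x => ?_, (finsum_coloring s.2.1).2.trans s.2.2⟩) ⟨fun s t h => ?_, ?_⟩
  · rw [coloring, coloring, minpoly_pow_card]
  · exact Subtype.ext (coloring_injective s.2.1 t.2.1 (congrArg Subtype.val h))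
  · rintro ⟨Λ, hfin, hfrob, hsum⟩
    obtain ⟨s, hs, rfl⟩ := exists_coloring_eq Λ hfin hfrob
    exact ⟨⟨s, hs, (finsum_coloring hs).2.symm.trans hsum⟩, rfl⟩

end SimilarityClasses

/-- **Similarity classes of `M_n(F_q)` as Frobenius-stable partition-valued colorings of
`K`** (Jordan decomposition): the number of orbits of the conjugation action of `GL_n(F_q)`
on `M_n(F_q)` (encoded as the cardinality of the set of such orbits) equals the number of
functions `Λ` from `K` (an algebraic closure of `F_q`) to the set of partitions of
nonnegative integers (encoded as the sigma type `Σ m, Partition m`) that are nonempty for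
only finitely many `x`, satisfy `Λ(x^q) = Λ(x)`, and have total size `n`. -/
theorem similarity_classes_eq_card_colorings (F : Type*) [Field F] [Fintype F]
    (q : ℕ) (hq : Fintype.card F = q) (n : ℕ) (hn : 1 ≤ n) :
    Nat.card ↥(Set.range fun A : Matrix (Fin n) (Fin n) F =>
        {B : Matrix (Fin n) (Fin n) F | ∃ g : Matrix.GeneralLinearGroup (Fin n) F,
          (g : Matrix (Fin n) (Fin n) F) * A * ((g⁻¹ : Matrix.GeneralLinearGroup (Fin n) F) :
            Matrix (Fin n) (Fin n) F) = B}) =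
      Nat.card {Λ : AlgebraicClosure F → Σ m : ℕ, m.Partition //
        {x : AlgebraicClosure F | (Λ x).1 ≠ 0}.Finite ∧
        (∀ x : AlgebraicClosure F, Λ (x ^ q) = Λ x) ∧
        ∑ᶠ x : AlgebraicClosure F, (Λ x).1 = n} := by
  subst hq
  exact (SimilarityClasses.card_similarity_classes n).trans (SimilarityClasses.card_colorings n)
end
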